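/- arXiv:2305.01541 — 6 statements merged into one kernel-verified Lean document; each statement's English description precedes it below -/
import Mathlib

section
/- Let N ≥ 1, 0 < s < 1, and let G be an Orlicz function satisfying hypotheses (H) with index p. Let M > 0 and let μ : [0,∞) → [0,∞) satisfy μ(t) → μ(0) = 0 as t → 0⁺. Let F ⊆ C¹(ℝ^N) be a family of functions such that |∇u(x)| ≤ M and |∇u(x) − ∇u(y)| ≤ μ(|x−y|) for all u ∈ F and all x, y ∈ ℝ^N. Then lim_{δ→0⁺} sup_{u∈F} sup_{x∈ℝ^N} | [p(1−s)/G(δ^{1−s})] ∫_{B(x,δ)} G(|u(x)−u(y)|/|x−y|^s) |x−y|^{−N} dy − K_{N,p} |∇u(x)|^p | = 0. -/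
/-!
Write `τ = δ^(1-s)`, `a = ∇u(x)`, `z = y - x`, `r = |z|`, `θ = (r/δ)^(1-s) ∈ (0,1)`, and
`Q = |u x - u y| / r`, so that `G(|u x - u y| / r^s) = G(Q θ τ)`. By the mean value inequality and
the common modulus of continuity of the gradients, `Q` is uniformly close to `Q₀ = |a · z/r|`.

Regular variation says `G(vτ)/G(τ) → v^p` for each `v`; since `G` is monotone and `v ↦ v^p` is
continuous, the convergence is uniform on every `[0, V]` (`G_unif`). On the other hand convexity
and `G 0 = 0` give `G(Qθτ)/G(τ) ≤ C θ`. The difference `|G(Qθτ)/G(τ) - (Qθ)^p|` is thus at most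
both `ω` (as small as desired) and `C θ`, hence at most their geometric mean `√(ω C) √θ`. This
yields the pointwise estimate (`pointwise_est`)
`|G(Qθτ)/G(τ) - Q₀^p θ^p| ≤ κ √θ`, with `κ → 0` uniformly in the family.

Dividing by `r^N` and integrating over the ball, both the main term and the error are
computed exactly in polar coordinates (`polar`):
`∫_{B(0,δ)} f(z/|z|) (|z|/δ)^β |z|^{-N} dz = β⁻¹ ∫ f dσ`, independently of `δ`. With
`β = (1-s)p` the main term becomes `K_{N,p} |a|^p / (p(1-s))`, by rotation invariance of the
sphere integral (`sphere_rot`); with `β = (1-s)/2` the error is `κ` times a constant.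
-/

open MeasureTheory Metric Filter Set
open scoped ENNReal RealInnerProductSpace Topology NNReal

noncomputable section

/-- Euclidean space `ℝ^N`. -/
abbrev Euc (N : ℕ) := EuclideanSpace ℝ (Fin N)

/-- `G : [0,∞) → [0,∞)` is an Orlicz function: continuous, convex, increasing,
`G 0 = 0`, superlinear at `0`, and satisfying the Δ₂ condition. -/
def IsOrlicz (G : ℝ → ℝ) : Prop :=
  (∀ t, 0 ≤ t → 0 ≤ G t) ∧
  ContinuousOn G (Set.Ici 0) ∧
  ConvexOn ℝ (Set.Ici 0) G ∧
  StrictMonoOn G (Set.Ici 0) ∧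
  G 0 = 0 ∧
  Tendsto (fun t => G t / t) (𝓝[>] (0:ℝ)) (𝓝 0) ∧
  ∃ c > 2, ∀ t ≥ (0:ℝ), G (2 * t) ≤ c * G t

/-- `f` is regularly varying at `0` (from the right) with index `ρ`. -/
def RegVaryAtZero (f : ℝ → ℝ) (ρ : ℝ) : Prop :=
  ∀ lam > (0:ℝ), Tendsto (fun t => f (lam * t) / f t) (𝓝[>] (0:ℝ)) (𝓝 (lam ^ ρ))

/-- Hypotheses (H): `G` is a (piecewise) smooth Orlicz function, regularly varying at `0`
of index `p`, its derivative is regularly varying at `0` of index `p - 1`, and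
`ℓ(t) = G(t)/t^p` is bounded below by a positive constant. -/
def HypH (G : ℝ → ℝ) (p : ℝ) : Prop :=
  IsOrlicz G ∧ RegVaryAtZero G p ∧
  (∃ g : ℝ → ℝ, (∀ t > (0:ℝ), HasDerivAt G (g t) t) ∧ RegVaryAtZero g (p - 1)) ∧
  ∃ c > (0:ℝ), ∀ t > (0:ℝ), c ≤ G t / t ^ p

/-- The modular `Φ_G(u) = ∫_{ℝ^N} G(|u|) dx`. -/
def PhiG (N : ℕ) (G : ℝ → ℝ) (u : Euc N → ℝ) : ℝ≥0∞ :=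
  ∫⁻ x, ENNReal.ofReal (G |u x|)

/-- The truncated nonlocal energy
`Ψ_{s,G,δ}(u) = ∫_{ℝ^N} ∫_{B(x,δ)} G(|u(x)-u(y)|/|x-y|^s) |x-y|^{-N} dy dx`. -/
def PsiG (N : ℕ) (s δ : ℝ) (G : ℝ → ℝ) (u : Euc N → ℝ) : ℝ≥0∞ :=
  ∫⁻ x, ∫⁻ y in ball x δ,
    ENNReal.ofReal (G (|u x - u y| / ‖x - y‖ ^ s) / ‖x - y‖ ^ (N : ℝ))

/-- `V` is the weak gradient of `u`:
`∫ u ∂φ/∂xᵢ = -∫ Vᵢ φ` for every test function `φ ∈ C_c^∞` and every `i`. -/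
def HasWeakGradient (N : ℕ) (u : Euc N → ℝ) (V : Euc N → Euc N) : Prop :=
  LocallyIntegrable u volume ∧ LocallyIntegrable V volume ∧
  ∀ φ : Euc N → ℝ, ContDiff ℝ (⊤ : ℕ∞) φ → HasCompactSupport φ → ∀ i : Fin N,
    ∫ x, u x * fderiv ℝ φ x (EuclideanSpace.single i 1) = -∫ x, V x i * φ x

/-- `K_{N,p} = ∫_{𝕊^{N-1}} |w·e|^p dσ(w)`, where `σ` is the surface measure on the
unit sphere of `ℝ^N`. -/
def sphereK (N : ℕ) (p : ℝ) (e : Euc N) : ℝ :=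
  ∫ w : sphere (0 : Euc N) 1, |(⟪(w : Euc N), e⟫)| ^ p
    ∂((volume : Measure (Euc N)).toSphere)

/-- Surface area of the unit sphere `𝕊^{N-1} ⊂ ℝ^N`. -/
def sphereArea (N : ℕ) : ℝ :=
  (((volume : Measure (Euc N)).toSphere) Set.univ).toReal

end

/-! ### Polar coordinates and rotation invariance -/

lemma radial_int (δ β : ℝ) (hδ : 0 < δ) (hβ : 0 < β) :
    IntegrableOn (fun r : ℝ => (r / δ) ^ β / r) (Ioo 0 δ) ∧
      ∫ r in Ioo 0 δ, (r / δ) ^ β / r = β⁻¹ := by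
  have heq : ∀ r ∈ Ioo 0 δ, (δ ^ β)⁻¹ * r ^ (β - 1) = (r / δ) ^ β / r := by
    intro r hr
    rw [Real.div_rpow hr.1.le hδ.le, Real.rpow_sub_one hr.1.ne']
    field_simp
  have h1 : IntervalIntegrable (fun r : ℝ => r ^ (β - 1)) volume 0 δ :=
    intervalIntegral.intervalIntegrable_rpow' (by linarith)
  have h2 : IntegrableOn (fun r : ℝ => r ^ (β - 1)) (Ioo 0 δ) :=
    ((intervalIntegrable_iff_integrableOn_Ioo_of_le hδ.le).1 h1)
  refine ⟨(integrableOn_congr_fun heq measurableSet_Ioo).1 (h2.const_mul _), ?_⟩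
  rw [← setIntegral_congr_fun measurableSet_Ioo heq, integral_const_mul,
    ← integral_Ioc_eq_integral_Ioo, ← intervalIntegral.integral_of_le hδ.le,
    integral_rpow (Or.inl (by linarith))]
  have : δ ^ β ≠ 0 := (Real.rpow_pos_of_pos hδ _).ne'
  rw [sub_add_cancel, Real.zero_rpow hβ.ne', sub_zero]
  field_simp

/-- Polar coordinates for an angular function times a radial power; the normalisation `‖z‖ / δ`
makes the value independent of `δ`. -/
lemma polar {N : ℕ} (hN : 1 ≤ N) (f : Euc N → ℝ) (hf : Continuous f) (δ β : ℝ)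
    (hδ : 0 < δ) (hβ : 0 < β) :
    IntegrableOn (fun z : Euc N => f (‖z‖⁻¹ • z) * ((‖z‖ / δ) ^ β / ‖z‖ ^ (N : ℝ)))
        (ball 0 δ) ∧
      ∫ z in ball (0 : Euc N) δ, f (‖z‖⁻¹ • z) * ((‖z‖ / δ) ^ β / ‖z‖ ^ (N : ℝ)) =
        β⁻¹ * ∫ w : sphere (0 : Euc N) 1, f w ∂((volume : Measure (Euc N)).toSphere) := by
  have : Nontrivial (Euc N) := by
    have : Nonempty (Fin N) := ⟨⟨0, hN⟩⟩
    infer_instance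
  set k : ℝ → ℝ := (Iio δ).indicator (fun r => (r / δ) ^ β / r ^ (N : ℝ)) with hk
  set Φ : Euc N → ℝ := fun z => f (‖z‖⁻¹ • z) * k ‖z‖ with hΦ
  have hind : (ball (0 : Euc N) δ).indicator
      (fun z : Euc N => f (‖z‖⁻¹ • z) * ((‖z‖ / δ) ^ β / ‖z‖ ^ (N : ℝ))) = Φ := by
    funext z
    by_cases hz : ‖z‖ < δ <;> simp [hΦ, hk, Set.indicator, hz]
  have hmp := (volume : Measure (Euc N)).measurePreserving_homeomorphUnitSphereProd
  have hdim : Module.finrank ℝ (Euc N) - 1 = N - 1 := by simp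
  rw [hdim] at hmp
  have hrad := radial_int δ β hδ hβ
  have hkr : ∀ r ∈ Ioi (0:ℝ), ((r ^ (N - 1)).toNNReal : NNReal) • k r
      = (Ioo 0 δ).indicator (fun r : ℝ => (r / δ) ^ β / r) r := by
    intro r hr
    have hr' : 0 < r := hr
    rw [NNReal.smul_def, Real.coe_toNNReal _ (pow_nonneg hr'.le _)]
    by_cases h : r < δ
    · have h3 : r ^ N = r ^ (N - 1) * r := by rw [← pow_succ, Nat.sub_add_cancel hN]
      simp only [hk, Set.indicator, mem_Iio, h, mem_Ioo, hr', and_self, if_true, smul_eq_mul,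
        Real.rpow_natCast, h3]
      field_simp
    · simp [hk, Set.indicator, h]
  have hmeas : Measurable fun r : Ioi (0:ℝ) => ((r : ℝ) ^ (N - 1)).toNNReal :=
    (measurable_subtype_coe.pow_const _).real_toNNReal
  have hradint : Integrable ((Ioo 0 δ).indicator (fun r : ℝ => (r / δ) ^ β / r)) :=
    (integrable_indicator_iff measurableSet_Ioo).2 hrad.1
  have hkint : Integrable (fun r : Ioi (0:ℝ) => k r) (Measure.volumeIoiPow (N - 1)) := by
    unfold Measure.volumeIoiPow
    refine (integrable_withDensity_iff_integrable_smul (f := fun r : Ioi (0:ℝ) =>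
      ((r : ℝ) ^ (N - 1)).toNNReal) hmeas).2 ?_
    have h4 : IntegrableOn (fun r : ℝ => ((r ^ (N - 1)).toNNReal : NNReal) • k r) (Ioi 0) :=
      (integrableOn_congr_fun hkr measurableSet_Ioi).2 hradint.integrableOn
    exact (integrableOn_iff_comap_subtypeVal measurableSet_Ioi).1 h4
  have hkval : ∫ r : Ioi (0:ℝ), k r ∂(Measure.volumeIoiPow (N - 1)) = β⁻¹ := by
    unfold Measure.volumeIoiPow
    rw [show (fun r : Ioi (0:ℝ) => ENNReal.ofReal ((r:ℝ) ^ (N - 1))) = fun r : Ioi (0:ℝ) =>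
      (((r : ℝ) ^ (N - 1)).toNNReal : ENNReal) from rfl,
      integral_withDensity_eq_integral_smul hmeas,
      integral_subtype_comap measurableSet_Ioi
        fun a : ℝ ↦ Real.toNNReal (a ^ (N - 1)) • k a,
      setIntegral_congr_fun measurableSet_Ioi hkr, setIntegral_indicator measurableSet_Ioo]
    rw [show Ioi (0:ℝ) ∩ Ioo 0 δ = Ioo 0 δ from inter_eq_right.2 fun r hr => hr.1]
    exact hrad.2
  have hfint : Integrable (fun w : sphere (0 : Euc N) 1 => f w)
      ((volume : Measure (Euc N)).toSphere) := by
    have hc : Continuous (fun w : sphere (0 : Euc N) 1 => f w) := by fun_prop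
    exact hc.integrable_of_hasCompactSupport (HasCompactSupport.of_compactSpace _)
  have hcomp : ∀ z : ({0}ᶜ : Set (Euc N)), Φ z =
      f ((homeomorphUnitSphereProd (Euc N) z).1 : Euc N) *
        k ((homeomorphUnitSphereProd (Euc N) z).2 : ℝ) := by
    intro z
    simp [hΦ]
  have hΦint : Integrable Φ := by
    rw [← restrict_compl_singleton (μ := (volume : Measure (Euc N))) 0, ← IntegrableOn,
      integrableOn_iff_comap_subtypeVal (measurableSet_singleton _).compl]
    have := (hmp.integrable_comp_emb (Homeomorph.measurableEmbedding _)).2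
      (hfint.mul_prod hkint)
    refine this.congr (Eventually.of_forall fun z => ?_)
    exact (hcomp z).symm
  have hΦval : ∫ z, Φ z = β⁻¹ * ∫ w : sphere (0 : Euc N) 1, f w
      ∂((volume : Measure (Euc N)).toSphere) := by
    have hpunct : ∫ z, Φ z = ∫ z in ({0}ᶜ : Set (Euc N)), Φ z := by
      rw [restrict_compl_singleton]
    rw [hpunct, ← integral_subtype_comap (measurableSet_singleton _).compl]
    simp_rw [hcomp]
    rw [hmp.integral_comp (Homeomorph.measurableEmbedding _)
      (fun q => f (q.1 : Euc N) * k (q.2 : ℝ)), integral_prod_mul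
        (fun w : sphere (0 : Euc N) 1 => f w) (fun r : Ioi (0:ℝ) => k r), hkval, mul_comm]
  refine ⟨?_, ?_⟩
  · rw [← integrable_indicator_iff measurableSet_ball, hind]; exact hΦint
  · rw [← integral_indicator measurableSet_ball, hind]; exact hΦval

/-- `p`-homogeneity and rotation invariance of the sphere integral. The invariance is transported
from Lebesgue measure on the unit ball (by `polar` with `δ = β = 1`), using the reflection that
maps `‖a‖ • e` to `a`. -/
lemma sphere_rot {N : ℕ} (hN : 1 ≤ N) (p : ℝ) (hp : 0 < p) (e : Euc N) (he : ‖e‖ = 1)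
    (a : Euc N) :
    sphereK N p a = ‖a‖ ^ p * sphereK N p e := by
  have hcont : ∀ b : Euc N, Continuous (fun w : Euc N => |⟪w, b⟫| ^ p) := fun b =>
    ((continuous_id.inner continuous_const).abs).rpow_const fun _ => Or.inr hp.le
  have hval : ∀ b : Euc N, sphereK N p b = ∫ z, (ball (0 : Euc N) 1).indicator
      (fun z => |⟪‖z‖⁻¹ • z, b⟫| ^ p * ((‖z‖ / 1) ^ (1:ℝ) / ‖z‖ ^ (N : ℝ))) z := by
    intro b
    rw [integral_indicator measurableSet_ball, (polar hN _ (hcont b) 1 1 one_pos one_pos).2]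
    simp [sphereK]
  have hnorm : ‖‖a‖ • e‖ = ‖a‖ := by simp [norm_smul, he]
  set R : Euc N ≃ₗᵢ[ℝ] Euc N := Submodule.reflection (ℝ ∙ (‖a‖ • e - a))ᗮ with hR
  have hRa : R (‖a‖ • e) = a := Submodule.reflection_sub hnorm
  have hRR : ∀ z, R (R z) = z := fun z => Submodule.reflection_reflection _ z
  have hinner : ∀ z, ⟪z, a⟫ = ‖a‖ * ⟪R z, e⟫ := by
    intro z
    conv_lhs => rw [← hRa, ← hRR z, R.inner_map_map, inner_smul_right]
  rw [hval a, hval e, ← integral_const_mul]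
  rw [← R.measurePreserving.integral_comp R.toHomeomorph.measurableEmbedding
    (fun z => ‖a‖ ^ p * (ball (0 : Euc N) 1).indicator
      (fun z => |⟪‖z‖⁻¹ • z, e⟫| ^ p * ((‖z‖ / 1) ^ (1:ℝ) / ‖z‖ ^ (N : ℝ))) z)]
  congr 1
  funext z
  by_cases hz : ‖z‖ < 1
  · simp only [Set.indicator, mem_ball_zero_iff, hz, if_true, R.norm_map, hinner, map_smul,
      abs_mul, abs_norm]
    rw [Real.mul_rpow (norm_nonneg _) (abs_nonneg _)]
    ring
  · simp [Set.indicator, hz]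

/-! ### Uniform asymptotics of the Orlicz function -/

/-- The lower bound `G t ≥ c t^p` is incompatible with `G t / t → 0` unless `p > 1`. -/
lemma HypH.one_lt {G : ℝ → ℝ} {p : ℝ} (hG : HypH G p) : 1 < p := by
  obtain ⟨⟨-, -, -, -, -, hlim, -⟩, -, -, c, hc, hbd⟩ := hG
  by_contra hp
  push Not at hp
  have h1 : ∀ᶠ t in 𝓝[>] (0:ℝ), G t / t < c := hlim.eventually_lt_const hc
  have h2 : ∀ᶠ t in 𝓝[>] (0:ℝ), t ∈ Ioo (0:ℝ) 1 := Ioo_mem_nhdsGT one_pos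
  obtain ⟨t, ht, ht0, ht1⟩ := (h1.and h2).exists
  have h3 := hbd t ht0
  have h4 : t ≤ t ^ p := by
    simpa using Real.rpow_le_rpow_of_exponent_ge ht0 ht1.le hp
  rw [le_div_iff₀ (Real.rpow_pos_of_pos ht0 _)] at h3
  rw [div_lt_iff₀ ht0] at ht
  nlinarith

/-- Monotone functions converging pointwise to a continuous limit on a compact interval converge
uniformly; here the functions are `v ↦ G (v τ) / G τ` as `τ → 0⁺`. The proof compares `v` with the
endpoints of its cell in a fine grid of `[0, V]`. -/
lemma G_unif {G : ℝ → ℝ} {p : ℝ} (hG : HypH G p) (V : ℝ) (hV : 0 < V) (ω : ℝ) (hω : 0 < ω) :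
    ∀ᶠ τ in 𝓝[>] (0:ℝ), ∀ v ∈ Icc 0 V, |G (v * τ) / G τ - v ^ p| ≤ ω := by
  have hp := hG.one_lt
  obtain ⟨⟨hnn, -, -, hmono, hG0, -, -⟩, hRV, -, -⟩ := hG
  have hcont : Continuous fun v : ℝ => v ^ p :=
    continuous_id.rpow_const fun _ => Or.inr (by linarith)
  have huc : UniformContinuousOn (fun v : ℝ => v ^ p) (Icc 0 V) :=
    isCompact_Icc.uniformContinuousOn_of_continuous hcont.continuousOn
  obtain ⟨η, hη, hη'⟩ := Metric.uniformContinuousOn_iff.1 huc (ω / 2) (by positivity)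
  obtain ⟨n, hn⟩ := exists_nat_gt (V / η)
  have hn0 : (0:ℝ) < n := lt_trans (by positivity) hn
  set h : ℝ := V / n with hh
  have hh0 : 0 < h := by positivity
  have hhη : h < η := by rw [hh, div_lt_iff₀ hn0]; rw [div_lt_iff₀ hη] at hn; linarith
  have hnh : n * h = V := by rw [hh]; field_simp
  have hpt : ∀ k : ℕ, ∀ᶠ τ in 𝓝[>] (0:ℝ), |G (k * h * τ) / G τ - (k * h) ^ p| < ω / 2 := by
    intro k
    rcases Nat.eq_zero_or_pos k with rfl | hk
    · simp [hG0, Real.zero_rpow (by linarith : p ≠ 0), hω]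
    · have := hRV (k * h) (by positivity)
      exact (Metric.tendsto_nhds.1 this (ω / 2) (by positivity)).mono fun τ hτ => by
        rwa [Real.dist_eq] at hτ
  have hall : ∀ᶠ τ in 𝓝[>] (0:ℝ), ∀ k ∈ Finset.range (n + 1),
      |G (k * h * τ) / G τ - (k * h) ^ p| < ω / 2 :=
    (Finset.eventually_all _).2 fun k _ => hpt k
  filter_upwards [hall, self_mem_nhdsWithin] with τ hτ (hτ0 : 0 < τ) v hv
  have hGτ : 0 < G τ := hG0 ▸ hmono (mem_Ici.2 le_rfl) (mem_Ici.2 hτ0.le) hτ0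
  have key : ∀ a b : ℝ, 0 ≤ a → a ≤ b → G (a * τ) / G τ ≤ G (b * τ) / G τ := fun a b ha hab => by
    have h5 : G (a * τ) ≤ G (b * τ) := hmono.monotoneOn
      (mem_Ici.2 (by positivity)) (mem_Ici.2 (mul_nonneg (ha.trans hab) hτ0.le)) (by gcongr)
    gcongr
  -- `v` lies in a cell `[k h, (k+1) h]` of the grid; `v = V` belongs to the last one.
  obtain ⟨k, hkn, hk1, hk2⟩ : ∃ k : ℕ, k + 1 ≤ n ∧ k * h ≤ v ∧ v ≤ (k + 1 : ℕ) * h := by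
    rcases hv.2.eq_or_lt with hvV | hvV
    · have : 1 ≤ n := by exact_mod_cast hn0
      refine ⟨n - 1, by omega, ?_, ?_⟩
      · rw [hvV, ← hnh]; gcongr; omega
      · rw [Nat.sub_add_cancel this, hnh]; exact hvV.le
    · refine ⟨⌊v / h⌋₊, ?_, ?_, ?_⟩
      · have : ⌊v / h⌋₊ < n := by
          rw [Nat.floor_lt (div_nonneg hv.1 hh0.le), div_lt_iff₀ hh0, hnh]; exact hvV
        omega
      · rw [← le_div_iff₀ hh0]; exact Nat.floor_le (div_nonneg hv.1 hh0.le)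
      · rw [← div_le_iff₀ hh0]; push_cast; exact (Nat.lt_floor_add_one _).le
  have hk0 : (0:ℝ) ≤ k * h := by positivity
  have hk1V : ((k + 1 : ℕ) : ℝ) * h ≤ V := by rw [← hnh]; gcongr
  have hcell : ((k + 1 : ℕ) : ℝ) * h = k * h + h := by push_cast; ring
  have e1 := abs_lt.1 (hτ k (Finset.mem_range.2 (by omega)))
  have e2 := abs_lt.1 (hτ (k + 1) (Finset.mem_range.2 (by omega)))
  have f1 := key _ _ hk0 hk1
  have f2 := key _ _ hv.1 hk2
  have g1 := hη' v hv (k * h) ⟨hk0, hk1.trans hv.2⟩ (by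
    rw [Real.dist_eq, abs_lt]; constructor <;> linarith)
  have g2 := hη' v hv ((k + 1 : ℕ) * h) ⟨hk0.trans (hk1.trans hk2), hk1V⟩ (by
    rw [Real.dist_eq, abs_lt]; constructor <;> linarith)
  rw [Real.dist_eq] at g1 g2
  have g1 := abs_lt.1 g1
  have g2 := abs_lt.1 g2
  rw [abs_le]
  constructor <;> linarith

/-- Uniform comparison of `G (Q θ τ) / G τ` with its limit. The factor `√θ` keeps the error
integrable against `r^{-N} dz` near the origin; it arises because the difference is bounded both by
a small constant and by a multiple of `θ`. -/
lemma pointwise_est {G : ℝ → ℝ} {p : ℝ} (hG : HypH G p) (V : ℝ) (hV : 0 < V) (κ : ℝ)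
    (hκ : 0 < κ) :
    ∃ η > 0, ∀ᶠ τ in 𝓝[>] (0:ℝ), ∀ Q ∈ Icc 0 V, ∀ Q₀ ∈ Icc 0 V, |Q - Q₀| < η →
      ∀ θ ∈ Ioo (0:ℝ) 1, |G (Q * θ * τ) / G τ - Q₀ ^ p * θ ^ p| ≤ κ * √θ := by
  have hp := hG.one_lt
  have hcont : Continuous fun v : ℝ => v ^ p :=
    continuous_id.rpow_const fun _ => Or.inr (by linarith)
  have huc : UniformContinuousOn (fun v : ℝ => v ^ p) (Icc 0 V) :=
    isCompact_Icc.uniformContinuousOn_of_continuous hcont.continuousOn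
  obtain ⟨η, hη, hη'⟩ := Metric.uniformContinuousOn_iff.1 huc (κ / 2) (by positivity)
  set C : ℝ := V ^ p + 1 with hC
  have hVp : 0 < V ^ p := Real.rpow_pos_of_pos hV _
  have hC0 : 0 < C := by positivity
  refine ⟨η, hη, ?_⟩
  filter_upwards [G_unif hG V hV 1 one_pos, G_unif hG V hV ((κ / 2) ^ 2 / C) (by positivity),
    self_mem_nhdsWithin] with τ h1 h2 (hτ0 : 0 < τ) Q hQ Q₀ hQ₀ hQQ θ hθ
  obtain ⟨⟨hnn, -, hconv, hmono, hG0, -, -⟩, -⟩ := hG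
  have hGτ : 0 < G τ := hG0 ▸ hmono (mem_Ici.2 le_rfl) (mem_Ici.2 hτ0.le) hτ0
  have hθ0 := hθ.1
  have hs : √θ * √θ = θ := Real.mul_self_sqrt hθ0.le
  have hs0 : 0 < √θ := Real.sqrt_pos.2 hθ0
  have hs1 : √θ ≤ 1 := Real.sqrt_le_one.2 hθ.2.le
  have hθs : θ ≤ √θ := by nlinarith
  have hθp : θ ^ p ≤ θ := by
    simpa using Real.rpow_le_rpow_of_exponent_ge hθ0 hθ.2.le hp.le
  have hθp0 : 0 < θ ^ p := Real.rpow_pos_of_pos hθ0 _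
  have hQθ : Q * θ ∈ Icc 0 V := ⟨mul_nonneg hQ.1 hθ0.le, by nlinarith [hQ.1, hQ.2, hθ.2]⟩
  have hA0 : 0 ≤ G (Q * θ * τ) / G τ := div_nonneg (hnn _ (mul_nonneg hQθ.1 hτ0.le)) hGτ.le
  have hA1 : G (Q * θ * τ) / G τ ≤ C * θ := by
    have c1 : G (Q * θ * τ) ≤ θ * G (Q * τ) := by
      have := hconv.2 (mem_Ici.2 (le_refl (0:ℝ))) (mem_Ici.2 (mul_nonneg hQ.1 hτ0.le))
        (sub_nonneg.2 hθ.2.le) hθ0.le (sub_add_cancel 1 θ)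
      simp only [smul_eq_mul, mul_zero, zero_add, hG0] at this
      rwa [show Q * θ * τ = θ * (Q * τ) by ring]
    have c3 := (abs_le.1 (h1 Q hQ)).2
    have c4 : Q ^ p ≤ V ^ p := Real.rpow_le_rpow hQ.1 hQ.2 (by linarith)
    calc G (Q * θ * τ) / G τ ≤ θ * G (Q * τ) / G τ := by gcongr
      _ = G (Q * τ) / G τ * θ := by ring
      _ ≤ C * θ := by gcongr; linarith
  have hB : (Q * θ) ^ p = Q ^ p * θ ^ p := Real.mul_rpow hQ.1 hθ0.le
  have hQp : 0 ≤ Q ^ p := Real.rpow_nonneg hQ.1 _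
  have hB1 : (Q * θ) ^ p ≤ C * θ := by
    have c4 : Q ^ p ≤ V ^ p := Real.rpow_le_rpow hQ.1 hQ.2 (by linarith)
    rw [hB]; gcongr; linarith
  have hB0 : 0 ≤ (Q * θ) ^ p := Real.rpow_nonneg hQθ.1 _
  -- A quantity bounded by both `(κ/2)² / C` and `C θ` is bounded by their geometric mean.
  have hAB : |G (Q * θ * τ) / G τ - (Q * θ) ^ p| ≤ κ / 2 * √θ := by
    have d1 := h2 _ hQθ
    have d2 : |G (Q * θ * τ) / G τ - (Q * θ) ^ p| ≤ C * θ := by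
      rw [abs_le]; constructor <;> linarith
    refine abs_le_of_sq_le_sq ?_ (by positivity)
    rw [← sq_abs]
    calc |G (Q * θ * τ) / G τ - (Q * θ) ^ p| ^ 2
        = |G (Q * θ * τ) / G τ - (Q * θ) ^ p| * |G (Q * θ * τ) / G τ - (Q * θ) ^ p| := sq _
      _ ≤ ((κ / 2) ^ 2 / C) * (C * θ) := by gcongr
      _ = (κ / 2) ^ 2 * θ := by field_simp
      _ = (κ / 2 * √θ) ^ 2 := by rw [mul_pow, sq (√θ), hs]
  have hBB : |(Q * θ) ^ p - Q₀ ^ p * θ ^ p| ≤ κ / 2 * √θ := by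
    have d := hη' Q hQ Q₀ hQ₀ (by rwa [Real.dist_eq])
    rw [Real.dist_eq] at d
    rw [hB, ← sub_mul, abs_mul, abs_of_pos hθp0]
    have := hθp.trans hθs
    gcongr
  have := abs_sub_le (G (Q * θ * τ) / G τ) ((Q * θ) ^ p) (Q₀ ^ p * θ ^ p)
  linarith

/-! ### Passage to the integral -/

lemma setIntegral_ball_sub {N : ℕ} (x : Euc N) (δ : ℝ) (f : Euc N → ℝ)
    (hf : IntegrableOn f (ball 0 δ)) :
    IntegrableOn (fun y => f (y - x)) (ball x δ) ∧
      ∫ y in ball x δ, f (y - x) = ∫ z in ball (0 : Euc N) δ, f z := by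
  have hind : (ball x δ).indicator (fun y => f (y - x)) =
      fun y => (ball (0 : Euc N) δ).indicator f (y - x) := by
    funext y
    simp [Set.indicator, dist_eq_norm]
  rw [← integrable_indicator_iff measurableSet_ball] at hf ⊢
  rw [← integral_indicator measurableSet_ball, ← integral_indicator measurableSet_ball, hind]
  exact ⟨hf.comp_sub_right x, integral_sub_right_eq_self _ x⟩

/-- First-order Taylor remainder on a ball, where the gradient oscillates by at most `η`. -/
lemma taylor_est {N : ℕ} {u : Euc N → ℝ} (hu : ContDiff ℝ 1 u) {μ : ℝ → ℝ} (hμ0 : μ 0 = 0)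
    (hue : ∀ x y, ‖gradient u x - gradient u y‖ ≤ μ ‖x - y‖) {δ η : ℝ} (hη : 0 ≤ η)
    (hμδ : ∀ t ∈ Ioo 0 δ, μ t ≤ η) {x y : Euc N} (hy : y ∈ ball x δ) :
    |u y - u x - ⟪gradient u x, y - x⟫| ≤ η * ‖y - x‖ := by
  have hδ : 0 < δ := pos_of_mem_ball hy
  have hdiff : Differentiable ℝ u := hu.differentiable one_ne_zero
  have := (convex_ball x δ).norm_image_sub_le_of_norm_fderiv_le' (𝕜 := ℝ) (f := u) (C := η)
    (φ := InnerProductSpace.toDual ℝ (Euc N) (gradient u x)) (fun z _ => hdiff z)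
    (fun z hz => by
      rw [← toDual_gradient, ← map_sub, LinearIsometryEquiv.norm_map]
      refine (hue z x).trans ?_
      rcases eq_or_ne z x with rfl | hzx
      · simpa [hμ0] using hη
      · exact hμδ _ ⟨norm_pos_iff.2 (sub_ne_zero.2 hzx), mem_ball_iff_norm.1 hz⟩)
    (mem_ball_self hδ) hy
  simpa using this

/-- The bound of `pointwise_est`, rewritten in terms of `z = y - x` and divided by `‖z‖ ^ N`.
It holds at `z = 0` too, where all three terms vanish because division by zero gives zero. -/
lemma integrand_est {N : ℕ} (hN : 1 ≤ N) {s : ℝ} (hs1 : s < 1) {G : ℝ → ℝ} {p : ℝ}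
    {V κ η δ : ℝ} (hδ : 0 < δ)
    (hest : ∀ Q ∈ Icc 0 (V + 1), ∀ Q₀ ∈ Icc 0 (V + 1), |Q - Q₀| < η →
      ∀ θ ∈ Ioo (0:ℝ) 1,
        |G (Q * θ * δ ^ (1 - s)) / G (δ ^ (1 - s)) - Q₀ ^ p * θ ^ p| ≤ κ * √θ)
    {ux uy η' : ℝ} (hη'1 : η' ≤ 1) (hη' : η' < η) {a z : Euc N} (ha : ‖a‖ ≤ V) (hz : ‖z‖ < δ)
    (hT : |uy - ux - ⟪a, z⟫| ≤ η' * ‖z‖) :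
    |(G (δ ^ (1 - s)))⁻¹ * (G (|ux - uy| / ‖z‖ ^ s) / ‖z‖ ^ (N : ℝ)) -
      |⟪‖z‖⁻¹ • z, a⟫| ^ p * ((‖z‖ / δ) ^ ((1 - s) * p) / ‖z‖ ^ (N : ℝ))| ≤
      κ * (1 * ((‖z‖ / δ) ^ ((1 - s) / 2) / ‖z‖ ^ (N : ℝ))) := by
  rcases eq_or_ne z 0 with rfl | hz0
  · have hN' : (N : ℝ) ≠ 0 := by positivity
    simp [Real.zero_rpow hN']
  have hr : 0 < ‖z‖ := norm_pos_iff.2 hz0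
  set r := ‖z‖ with hrdef
  have hrδ : 0 < r / δ := by positivity
  have hrδ1 : r / δ < 1 := (div_lt_one hδ).2 hz
  have hin : ⟪r⁻¹ • z, a⟫ = ⟪a, z⟫ / r := by
    rw [real_inner_smul_left, real_inner_comm, div_eq_inv_mul]
  have hQ₀le : |⟪a, z⟫ / r| ≤ V := by
    rw [abs_div, abs_of_pos hr, div_le_iff₀ hr]
    exact (abs_real_inner_le_norm a z).trans (by gcongr)
  have hQQ : |(|ux - uy| / r) - (|⟪a, z⟫ / r|)| ≤ η' := by
    rw [abs_div ⟪a, z⟫, abs_of_pos hr, ← sub_div, abs_div, abs_of_pos hr, div_le_iff₀ hr,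
      abs_sub_comm ux uy]
    exact (abs_abs_sub_abs_le_abs_sub _ _).trans hT
  have hQle : |ux - uy| / r ≤ V + 1 := by have := (abs_le.1 hQQ).2; linarith
  have key := hest (|ux - uy| / r) ⟨by positivity, hQle⟩ (|⟪a, z⟫ / r|)
    ⟨abs_nonneg _, by linarith⟩ (hQQ.trans_lt hη') ((r / δ) ^ (1 - s))
    ⟨Real.rpow_pos_of_pos hrδ _, Real.rpow_lt_one hrδ.le hrδ1 (by linarith)⟩
  have harg : |ux - uy| / r * (r / δ) ^ (1 - s) * δ ^ (1 - s) = |ux - uy| / r ^ s := by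
    rw [mul_assoc, ← Real.mul_rpow hrδ.le hδ.le, div_mul_cancel₀ _ hδ.ne', Real.rpow_sub hr,
      Real.rpow_one]
    have := (Real.rpow_pos_of_pos hr s).ne'
    field_simp
  rw [harg, Real.sqrt_eq_rpow, ← Real.rpow_mul hrδ.le, ← Real.rpow_mul hrδ.le] at key
  have hrN : 0 < r ^ (N : ℝ) := Real.rpow_pos_of_pos hr _
  have hdiv : ∀ A B C : ℝ, |A - B| ≤ C → |A / r ^ (N : ℝ) - B / r ^ (N : ℝ)| ≤ C / r ^ (N : ℝ) := by
    intro A B C h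
    rw [← sub_div, abs_div, abs_of_pos hrN]
    gcongr
  convert hdiv _ _ _ key using 1
  · rw [hin]; congr 1; ring
  · rw [one_mul, mul_div_assoc]; congr 3; ring

lemma measurable_integrand {N : ℕ} {G : ℝ → ℝ} (hGc : ContinuousOn G (Ici 0)) {u : Euc N → ℝ}
    (hu : Continuous u) (s : ℝ) (x : Euc N) :
    Measurable fun y => G (|u x - u y| / ‖x - y‖ ^ s) / ‖x - y‖ ^ (N : ℝ) := by
  have hGm : Continuous fun t : ℝ => G (max t 0) :=
    hGc.comp_continuous (by fun_prop) fun t => mem_Ici.2 (le_max_right _ _)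
  have heq : (fun y => G (|u x - u y| / ‖x - y‖ ^ s) / ‖x - y‖ ^ (N : ℝ)) = fun y =>
      (fun t : ℝ => G (max t 0)) (|u x - u y| / ‖x - y‖ ^ s) / ‖x - y‖ ^ (N : ℝ) := by
    funext y
    have : 0 ≤ |u x - u y| / ‖x - y‖ ^ s := by positivity
    simp only [max_eq_left this]
  rw [heq]
  have hnorm : Measurable fun y : Euc N => ‖x - y‖ := by fun_prop
  have hnum : Measurable fun y : Euc N => |u x - u y| :=
    (continuous_const.sub hu).abs.measurable
  exact (hGm.measurable.comp (hnum.div (hnorm.pow_const s))).div (hnorm.pow_const _)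

/-- **Uniform localization for equi-Lipschitz families** (Remark 3.2):
the pointwise localization limit holds uniformly over a family `F ⊆ C¹` with uniformly
bounded and equicontinuous gradients. -/
theorem uniform_localization
    (N : ℕ) (hN : 1 ≤ N) (s : ℝ) (hs0 : 0 < s) (hs1 : s < 1)
    (G : ℝ → ℝ) (p : ℝ) (hG : HypH G p)
    (e : Euc N) (he : ‖e‖ = 1)
    (M : ℝ) (hM : 0 < M)
    (μ : ℝ → ℝ) (hμ0 : μ 0 = 0) (hμnn : ∀ t ≥ (0:ℝ), 0 ≤ μ t)
    (hμlim : Tendsto μ (𝓝[>] (0:ℝ)) (𝓝 0))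
    (F : Set (Euc N → ℝ)) (hF : ∀ u ∈ F, ContDiff ℝ 1 u)
    (hFb : ∀ u ∈ F, ∀ x, ‖gradient u x‖ ≤ M)
    (hFe : ∀ u ∈ F, ∀ x y, ‖gradient u x - gradient u y‖ ≤ μ ‖x - y‖) :
    ∀ ε > (0:ℝ), ∀ᶠ δ in 𝓝[>] (0:ℝ), ∀ u ∈ F, ∀ x : Euc N,
      |(p * (1 - s) / G (δ ^ (1 - s))) *
          (∫⁻ y in ball x δ,
            ENNReal.ofReal (G (|u x - u y| / ‖x - y‖ ^ s) / ‖x - y‖ ^ (N : ℝ))).toReal -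
        sphereK N p e * ‖gradient u x‖ ^ p| ≤ ε := by
  intro ε hε
  have hp := hG.one_lt
  have hs1' : 0 < 1 - s := by linarith
  set S : ℝ := ∫ _ : sphere (0 : Euc N) 1, (1:ℝ) ∂((volume : Measure (Euc N)).toSphere) with hS
  have hS0 : 0 ≤ S := integral_nonneg fun _ => zero_le_one
  -- The error term integrates to `κ * ((1 - s) / 2)⁻¹ * S` and is then multiplied by `p * (1 - s)`.
  set κ : ℝ := ε / (2 * p * (S + 1)) with hκ
  have hκ0 : 0 < κ := by positivity
  obtain ⟨η, hη, hest⟩ := pointwise_est hG (M + 1) (by linarith) κ hκ0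
  obtain ⟨⟨hnn, hGc, -, hmono, hG0, -, -⟩, -⟩ := hG
  set η' : ℝ := min 1 (η / 2) with hη'def
  have hη'0 : 0 < η' := by positivity
  have hη'η : η' < η := (min_le_right _ _).trans_lt (by linarith)
  obtain ⟨δ₀, hδ₀, hμδ₀⟩ := mem_nhdsGT_iff_exists_Ioo_subset.1 (hμlim.eventually_lt_const hη'0)
  have hτlim : Tendsto (fun δ : ℝ => δ ^ (1 - s)) (𝓝[>] 0) (𝓝[>] 0) := by
    refine tendsto_nhdsWithin_iff.2 ⟨?_, ?_⟩
    · have : ContinuousAt (fun δ : ℝ => δ ^ (1 - s)) 0 :=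
        Real.continuousAt_rpow_const _ _ (Or.inr hs1'.le)
      have h := this.tendsto.mono_left (nhdsWithin_le_nhds (s := Ioi 0))
      simpa [Real.zero_rpow hs1'.ne'] using h
    · filter_upwards [self_mem_nhdsWithin] with δ hδ using Real.rpow_pos_of_pos hδ _
  filter_upwards [hτlim.eventually hest, Ioo_mem_nhdsGT hδ₀] with δ hestδ hδ u hu x
  have hδ0 : 0 < δ := hδ.1
  have hτ0 : 0 < δ ^ (1 - s) := Real.rpow_pos_of_pos hδ0 _
  set a := gradient u x with ha
  have hGτ : 0 < G (δ ^ (1 - s)) := hG0 ▸ hmono (mem_Ici.2 le_rfl) (mem_Ici.2 hτ0.le) hτ0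
  have hfa : Continuous (fun w : Euc N => |⟪w, a⟫| ^ p) :=
    ((continuous_id.inner continuous_const).abs).rpow_const fun _ => Or.inr (by linarith)
  obtain ⟨hI1, hV1⟩ := polar hN _ hfa δ ((1 - s) * p) hδ0 (by positivity)
  obtain ⟨hI2, hV2⟩ := polar hN (fun _ => (1:ℝ)) continuous_const δ ((1 - s) / 2) hδ0 (by positivity)
  obtain ⟨hJ1, hW1⟩ := setIntegral_ball_sub x δ _ hI1
  obtain ⟨hJ2, hW2⟩ := setIntegral_ball_sub x δ _ hI2
  rw [hV1] at hW1
  rw [hV2, ← hS] at hW2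
  change _ = _ * sphereK N p a at hW1
  rw [sphere_rot hN p (by linarith) e he a] at hW1
  set I : Euc N → ℝ := fun y => G (|u x - u y| / ‖x - y‖ ^ s) / ‖x - y‖ ^ (N : ℝ) with hIdef
  have hImeas : Measurable I := measurable_integrand hGc (hF u hu).continuous s x
  set h : Euc N → ℝ := fun y => |⟪‖y - x‖⁻¹ • (y - x), a⟫| ^ p *
    ((‖y - x‖ / δ) ^ ((1 - s) * p) / ‖y - x‖ ^ (N : ℝ)) with hh
  set k : Euc N → ℝ := fun y => 1 * ((‖y - x‖ / δ) ^ ((1 - s) / 2) / ‖y - x‖ ^ (N : ℝ)) with hk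
  have hpt : ∀ y ∈ ball x δ, |(G (δ ^ (1 - s)))⁻¹ * I y - h y| ≤ κ * k y := by
    intro y hy
    have hT := taylor_est (hF u hu) hμ0 (hFe u hu) hη'0.le
      (fun t ht => (hμδ₀ ⟨ht.1, ht.2.trans hδ.2⟩ : μ t < η').le) hy
    have := integrand_est hN hs1 hδ0 hestδ (min_le_left _ _) hη'η (hFb u hu x)
      (mem_ball_iff_norm.1 hy) hT
    simpa only [hIdef, norm_sub_rev x y] using this
  have hE : IntegrableOn (fun y => (G (δ ^ (1 - s)))⁻¹ * I y - h y) (ball x δ) := by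
    refine (hJ2.const_mul κ).mono' ((hImeas.const_mul _).aestronglyMeasurable.sub
      hJ1.aestronglyMeasurable) ?_
    exact (ae_restrict_iff' measurableSet_ball).2 (Eventually.of_forall hpt)
  have hDint : IntegrableOn (fun y => (G (δ ^ (1 - s)))⁻¹ * I y) (ball x δ) := by
    have := hE.add hJ1
    refine this.congr (Eventually.of_forall fun y => ?_)
    simp [hh]
  have hbound : |(∫ y in ball x δ, (G (δ ^ (1 - s)))⁻¹ * I y) - ∫ y in ball x δ, h y| ≤
      κ * (((1 - s) / 2)⁻¹ * S) := by
    rw [← integral_sub hDint hJ1, ← hW2, ← integral_const_mul]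
    exact norm_integral_le_of_norm_le
      (f := fun y => (G (δ ^ (1 - s)))⁻¹ * I y - h y) (hJ2.const_mul κ)
      ((ae_restrict_iff' measurableSet_ball).2 (Eventually.of_forall hpt))
  have hlint : (∫⁻ y in ball x δ, ENNReal.ofReal (I y)).toReal = ∫ y in ball x δ, I y := by
    refine (integral_eq_lintegral_of_nonneg_ae (Eventually.of_forall fun y => ?_)
      hImeas.aestronglyMeasurable).symm
    exact div_nonneg (hnn _ (by positivity)) (by positivity)
  rw [hlint]
  rw [integral_const_mul, hW1] at hbound
  have hfin : p * (1 - s) / G (δ ^ (1 - s)) * (∫ y in ball x δ, I y) - sphereK N p e * ‖a‖ ^ p =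
      (p * (1 - s)) * ((G (δ ^ (1 - s)))⁻¹ * (∫ y in ball x δ, I y) -
        ((1 - s) * p)⁻¹ * (‖a‖ ^ p * sphereK N p e)) := by
    have : p ≠ 0 := by linarith
    field_simp
  rw [hfin, abs_mul, abs_of_pos (by positivity)]
  calc _ ≤ p * (1 - s) * (κ * (((1 - s) / 2)⁻¹ * S)) := by gcongr
    _ = ε * (S / (S + 1)) := by rw [hκ]; field_simp
    _ ≤ ε * 1 := by gcongr; rw [div_le_one (by linarith)]; linarith
    _ = ε := mul_one _
end

section
/- Let N ≥ 1, let G be an Orlicz function satisfying hypotheses (H) with index p > 1, and let J : (0,∞) → (0,∞) be continuous and regularly varying at 0 of index q ∈ ℝ with N + p + q > 0. Then for every u ∈ C_c²(ℝ^N), lim_{δ→0⁺} [(N+p+q)/(G(δ) J(δ) δ^N)] ∫_{ℝ^N} ∫_{B(x,δ)} G(|u(x)−u(y)|) J(|x−y|) dy dx = K_{N,p} ∫_{ℝ^N} |∇u(x)|^p dx. -/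
/-!
Substituting `y = x + δz` turns the normalized energy into `N + p + q` times the integral over
`x ∈ ℝ^N`, `|z| < 1` of `G(|u(x) - u(x + δz)|) / G(δ) * J(δ|z|) / J(δ)`. As `δ → 0⁺` this integrand
converges pointwise to `|∇u(x) · z|^p |z|^q`: the factor `J` by definition of regular variation, the
factor `G` because monotonicity of `G` lets the ratio vary with `δ` (`regVary_comp_tendsto`).

For domination, `u` is Lipschitz and `G` is doubling, so the integrand is at most a constant times
`H(δ|z|) / H(δ)` with `H = G * J` continuous and regularly varying of index `p + q`. Potter's bound
(`potter`, proved through Baire's theorem) bounds this by `C |z|^(p + q - ε)`, integrable on the unit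
ball when `ε < N + p + q`; in `x` everything lives in the 1-thickening of the support of `u`.
Dominated convergence in `z` and then in `x` applies, and the limit is evaluated in polar coordinates
(`polar_moment`): the radial integral is `1 / (N + p + q)` and the spherical one is
`|∇u(x)|^p K_{N,p}`.
-/

open MeasureTheory Metric Filter Set
open scoped ENNReal RealInnerProductSpace Topology NNReal

/-! ### Regular variation -/

/-- Potter's bound in additive form. By Baire's theorem the increments `k (x + s) - k x` are bounded,
uniformly in large `x`, for `s` in some interval; a fixed small step then has increment at most
`ε` times its length, and iterating it covers all `s ≥ 0`. -/
theorem additive_potter {k : ℝ → ℝ} (hk : Continuous k)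
    (hlim : ∀ s : ℝ, Tendsto (fun x => k (x + s) - k x) atTop (𝓝 0)) {ε : ℝ} (hε : 0 < ε) :
    ∃ x₀ : ℝ, ∀ x ≥ x₀, ∀ s ≥ 0, k (x + s) - k x ≤ 2 + ε * s := by
  let A : ℕ → Set ℝ := fun n => ⋂ x : Set.Ici (n : ℝ), {s | |k (x + s) - k x| ≤ 1}
  have hAc : ∀ n, IsClosed (A n) := fun n =>
    isClosed_iInter fun x => isClosed_le (by fun_prop) continuous_const
  have hAu : ⋃ n, A n = Set.univ := by
    refine Set.eq_univ_of_forall fun s => ?_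
    have h := (hlim s).eventually (Metric.closedBall_mem_nhds 0 one_pos)
    obtain ⟨b, hb⟩ := eventually_atTop.1 h
    obtain ⟨n, hn⟩ := exists_nat_ge b
    refine Set.mem_iUnion.2 ⟨n, Set.mem_iInter.2 fun x => ?_⟩
    have := hb x (hn.trans x.2)
    simpa [Real.dist_eq] using this
  obtain ⟨n, a, ha⟩ := nonempty_interior_of_iUnion_of_closed hAc hAu
  obtain ⟨r, hr, hball⟩ := Metric.mem_nhds_iff.1 (mem_interior_iff_mem_nhds.1 ha)
  have hA : ∀ s ∈ Metric.ball a r, ∀ x ≥ (n : ℝ), |k (x + s) - k x| ≤ 1 := fun s hs x hx =>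
    Set.mem_iInter.1 (hball hs) ⟨x, hx⟩
  -- Translating by `a` turns boundedness near `a` into boundedness on `[0, r)`.
  have hsmall : ∀ x ≥ n + a, ∀ s, 0 ≤ s → s < r → k (x + s) - k x ≤ 2 := by
    intro x hx s hs0 hsr
    have h1 := hA (a + s) (by simp [abs_of_nonneg hs0, hsr]) (x - a) (by linarith)
    have h2 := hA a (Metric.mem_ball_self hr) (x - a) (by linarith)
    rw [show x - a + (a + s) = x + s by ring] at h1
    rw [sub_add_cancel] at h2
    linarith [(abs_le.1 h1).2, (abs_le.1 h2).1]
  set h := r / 2 with hh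
  have hh0 : 0 < h := by positivity
  obtain ⟨b, hb⟩ := eventually_atTop.1 ((hlim h).eventually_le_const (mul_pos hε hh0))
  refine ⟨max (n + a) b, fun x hx s hs => ?_⟩
  have hx1 : n + a ≤ x := (le_max_left _ _).trans hx
  have hx2 : b ≤ x := (le_max_right _ _).trans hx
  have hstep : ∀ m : ℕ, k (x + m * h) - k x ≤ m * (ε * h) := by
    intro m
    induction m with
    | zero => simp
    | succ m ih =>
      have := hb (x + m * h) (by nlinarith [mul_nonneg (Nat.cast_nonneg (α := ℝ) m) hh0.le])
      rw [show x + (m + 1 : ℕ) * h = x + m * h + h by push_cast; ring]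
      push_cast
      linarith
  set m := ⌊s / h⌋₊
  have hm1 : m * h ≤ s := (le_div_iff₀ hh0).1 (Nat.floor_le (by positivity))
  have hm2 : s < (m + 1) * h := (div_lt_iff₀ hh0).1 (Nat.lt_floor_add_one _)
  have h3 := hsmall (x + m * h) (by nlinarith [mul_nonneg (Nat.cast_nonneg (α := ℝ) m) hh0.le])
    (s - m * h) (by linarith) (by linarith)
  rw [show x + m * h + (s - m * h) = x + s by ring] at h3
  nlinarith [hstep m]

/-- Potter's bound for a function regularly varying at `0`: up to a constant, `f (lam * t) / f t` is at
most `lam ^ (ρ - ε)`, uniformly in small `t` and all `lam ∈ (0, 1]`. -/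
theorem potter {f : ℝ → ℝ} {ρ ε : ℝ} (hpos : ∀ t > 0, 0 < f t)
    (hcont : ContinuousOn f (Set.Ioi 0)) (hf : RegVaryAtZero f ρ) (hε : 0 < ε) :
    ∃ t₀ > 0, ∀ t, 0 < t → t ≤ t₀ → ∀ lam, 0 < lam → lam ≤ 1 →
      f (lam * t) ≤ Real.exp 2 * lam ^ (ρ - ε) * f t := by
  let k : ℝ → ℝ := fun x => Real.log (f (Real.exp (-x))) + ρ * x
  have hk : Continuous k := by
    have : Continuous fun x : ℝ => f (Real.exp (-x)) :=
      hcont.comp_continuous (by fun_prop) fun x => Real.exp_pos _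
    exact (this.log fun x => (hpos _ (Real.exp_pos _)).ne').add (by fun_prop)
  have hlim : ∀ s : ℝ, Tendsto (fun x => k (x + s) - k x) atTop (𝓝 0) := by
    intro s
    have h1 : Tendsto (fun x : ℝ => Real.exp (-x)) atTop (𝓝[>] 0) :=
      tendsto_nhdsWithin_iff.2 ⟨Real.tendsto_exp_neg_atTop_nhds_zero,
        Eventually.of_forall fun x => Real.exp_pos _⟩
    have h2 := ((hf (Real.exp (-s)) (Real.exp_pos _)).comp h1).log
      (Real.rpow_pos_of_pos (Real.exp_pos _) _).ne'
    have h3 := h2.add_const (ρ * s)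
    rw [Real.log_rpow (Real.exp_pos _), Real.log_exp,
      show ρ * -s + ρ * s = 0 by ring] at h3
    refine h3.congr fun x => ?_
    have e1 := hpos _ (Real.exp_pos (-s + -x))
    have e2 := hpos _ (Real.exp_pos (-x))
    simp only [Function.comp, k, ← Real.exp_add]
    rw [Real.log_div e1.ne' e2.ne', show -(x + s) = -s + -x by ring]
    ring
  obtain ⟨x₀, hx₀⟩ := additive_potter hk hlim hε
  refine ⟨Real.exp (-x₀), Real.exp_pos _, fun t ht htt lam hl hl1 => ?_⟩
  have hlt : 0 < lam * t := by positivity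
  have h := hx₀ (-Real.log t) (by have := (Real.log_le_iff_le_exp ht).2 htt; linarith)
    (-Real.log lam) (by have := Real.log_nonpos hl.le hl1; linarith)
  simp only [k] at h
  rw [show -(-Real.log t + -Real.log lam) = Real.log (lam * t) by
    rw [Real.log_mul hl.ne' ht.ne']; ring, neg_neg, Real.exp_log ht, Real.exp_log hlt] at h
  rw [← Real.log_le_log_iff (hpos _ hlt)
    (mul_pos (mul_pos (Real.exp_pos _) (Real.rpow_pos_of_pos hl _)) (hpos _ ht)),
    Real.log_mul (mul_pos (Real.exp_pos _) (Real.rpow_pos_of_pos hl _)).ne' (hpos _ ht).ne',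
    Real.log_mul (Real.exp_pos _).ne' (Real.rpow_pos_of_pos hl _).ne', Real.log_exp,
    Real.log_rpow hl]
  linarith

/-- Since `G` is monotone, regular variation passes to variable ratios. -/
theorem regVary_comp_tendsto {G : ℝ → ℝ} {p : ℝ} (hp : 0 < p) (hmono : MonotoneOn G (Set.Ici 0))
    (hpos : ∀ t > 0, 0 < G t) (h0 : 0 ≤ G 0) (hG : RegVaryAtZero G p) {a : ℝ → ℝ} {a₀ : ℝ}
    (ha : Tendsto a (𝓝[>] 0) (𝓝 a₀)) (hann : ∀ t, 0 < t → 0 ≤ a t) (ha₀ : 0 ≤ a₀) :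
    Tendsto (fun t => G (a t * t) / G t) (𝓝[>] 0) (𝓝 (a₀ ^ p)) := by
  have hcont : ContinuousAt (fun x : ℝ => x ^ p) a₀ :=
    Real.continuousAt_rpow_const _ _ (Or.inr hp.le)
  have hself : ∀ᶠ t : ℝ in 𝓝[>] 0, 0 < t := self_mem_nhdsWithin
  have hGnn : ∀ t, 0 ≤ t → 0 ≤ G t := fun t ht =>
    h0.trans (hmono Set.self_mem_Ici ht ht)
  refine tendsto_order.2 ⟨fun c hc => ?_, fun c hc => ?_⟩
  · rcases ha₀.eq_or_lt with rfl | hapos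
    · rw [Real.zero_rpow hp.ne'] at hc
      filter_upwards [hself] with t ht
      exact hc.trans_le (div_nonneg (hGnn _ (mul_nonneg (hann t ht) ht.le)) (hpos t ht).le)
    · have h1 : ∀ᶠ l in 𝓝[<] a₀, c < l ^ p ∧ 0 < l ∧ l < a₀ :=
        (((hcont.eventually_const_lt hc).and (lt_mem_nhds hapos)).filter_mono
          nhdsWithin_le_nhds |>.and self_mem_nhdsWithin).mono fun l hl => ⟨hl.1.1, hl.1.2, hl.2⟩
      obtain ⟨l, hlc, hl0, hla⟩ := h1.exists
      filter_upwards [hself, (hG l hl0).eventually_const_lt hlc, ha.eventually_const_lt hla]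
        with t ht h2 h3
      refine h2.trans_le (div_le_div_of_nonneg_right (hmono ?_ ?_ ?_) (hpos t ht).le)
      · exact (mul_pos hl0 ht).le
      · exact mul_nonneg (hann t ht) ht.le
      · gcongr
  · have h1 : ∀ᶠ l in 𝓝[>] a₀, l ^ p < c ∧ a₀ < l :=
        ((hcont.eventually_lt_const hc).filter_mono nhdsWithin_le_nhds).and self_mem_nhdsWithin
    obtain ⟨l, hlc, hla⟩ := h1.exists
    have hl0 : 0 < l := ha₀.trans_lt hla
    filter_upwards [hself, (hG l hl0).eventually_lt_const hlc, ha.eventually_lt_const hla]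
      with t ht h2 h3
    refine (div_le_div_of_nonneg_right (hmono ?_ ?_ ?_) (hpos t ht).le).trans_lt h2
    · exact mul_nonneg (hann t ht) ht.le
    · exact (mul_pos hl0 ht).le
    · gcongr

theorem doubling_bound {G : ℝ → ℝ} (hG : IsOrlicz G) {L : ℝ} (hL : 0 ≤ L) :
    ∃ C ≥ 0, ∀ t ≥ 0, G (L * t) ≤ C * G t := by
  obtain ⟨hnn, -, -, hmono, -, -, c, hc, h2⟩ := hG
  obtain ⟨n, hn⟩ := pow_unbounded_of_one_lt L (one_lt_two)
  have h3 : ∀ n : ℕ, ∀ t ≥ 0, G (2 ^ n * t) ≤ c ^ n * G t := by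
    intro n
    induction n with
    | zero => simp
    | succ n ih =>
      intro t ht
      calc G (2 ^ (n + 1) * t) = G (2 * (2 ^ n * t)) := by ring_nf
        _ ≤ c * G (2 ^ n * t) := h2 _ (by positivity)
        _ ≤ c * (c ^ n * G t) := by gcongr; exact ih t ht
        _ = c ^ (n + 1) * G t := by ring
  refine ⟨c ^ n, by positivity, fun t ht => le_trans ?_ (h3 n t ht)⟩
  exact hmono.monotoneOn (mul_nonneg hL ht) (show (0:ℝ) ≤ 2 ^ n * t by positivity) (by gcongr)

/-! ### Directional moments of the unit ball -/

/-- Integration in polar coordinates, with radial factor `∫₀¹ r ^ (N + p + q - 1) dr`. -/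
theorem polar_moment_unit {N : ℕ} (hN : 1 ≤ N) {p q : ℝ} (hNpq : 0 < (N : ℝ) + p + q)
    (e : Euc N) :
    ∫ z in ball (0 : Euc N) 1, |⟪z, e⟫| ^ p * ‖z‖ ^ q = sphereK N p e / ((N : ℝ) + p + q) := by
  have : Nonempty (Fin N) := ⟨⟨0, hN⟩⟩
  have hdim : Module.finrank ℝ (Euc N) = N := by simp
  let f : Euc N → ℝ := (ball (0 : Euc N) 1).indicator fun z => |⟪z, e⟫| ^ p * ‖z‖ ^ q
  let g : ℝ → ℝ := (Set.Iio 1).indicator fun r => r ^ (p + q)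
  have hfg : ∀ z : ({0}ᶜ : Set (Euc N)), f z =
      (fun w : sphere (0 : Euc N) 1 × Set.Ioi (0 : ℝ) => |⟪(w.1 : Euc N), e⟫| ^ p * g w.2)
        (homeomorphUnitSphereProd (Euc N) z) := by
    rintro ⟨z, hz⟩
    have hz0 : 0 < ‖z‖ := norm_pos_iff.2 hz
    by_cases h1 : ‖z‖ < 1
    · simp only [f, g, homeomorphUnitSphereProd_apply_fst_coe,
        homeomorphUnitSphereProd_apply_snd_coe]
      rw [Set.indicator_of_mem (by simpa using h1), Set.indicator_of_mem (by simpa using h1),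
        real_inner_smul_left, abs_mul, abs_of_pos (inv_pos.2 hz0),
        Real.mul_rpow (by positivity) (abs_nonneg _), Real.rpow_add hz0, Real.inv_rpow hz0.le]
      have : ‖z‖ ^ p ≠ 0 := (Real.rpow_pos_of_pos hz0 _).ne'
      field_simp
    · simp only [f, g, homeomorphUnitSphereProd_apply_snd_coe]
      rw [Set.indicator_of_notMem (by simpa using h1), Set.indicator_of_notMem (by simpa using h1),
        mul_zero]
  calc ∫ z in ball (0 : Euc N) 1, |⟪z, e⟫| ^ p * ‖z‖ ^ q = ∫ z, f z := by
        rw [integral_indicator measurableSet_ball]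
    _ = ∫ z : ({0}ᶜ : Set (Euc N)), f z ∂((volume : Measure (Euc N)).comap (↑)) := by
        rw [integral_subtype_comap (measurableSet_singleton _).compl f,
          restrict_compl_singleton]
    _ = ∫ w, |⟪(w.1 : Euc N), e⟫| ^ p * g w.2
          ∂((volume : Measure (Euc N)).toSphere.prod
            (.volumeIoiPow (Module.finrank ℝ (Euc N) - 1))) := by
        rw [← (volume : Measure (Euc N)).measurePreserving_homeomorphUnitSphereProd.integral_comp
          (Homeomorph.measurableEmbedding _)]
        exact integral_congr_ae (Eventually.of_forall hfg)
    _ = sphereK N p e * ∫ r : Set.Ioi (0 : ℝ), g r ∂(.volumeIoiPow (N - 1)) := by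
        rw [hdim, integral_prod_mul (fun w : sphere (0 : Euc N) 1 => |⟪(w : Euc N), e⟫| ^ p)
          (fun r : Set.Ioi (0 : ℝ) => g r)]
        rfl
    _ = sphereK N p e / ((N : ℝ) + p + q) := by
        rw [div_eq_mul_inv]
        congr 1
        simp only [Measure.volumeIoiPow, ENNReal.ofReal]
        rw [integral_withDensity_eq_integral_smul
            ((measurable_subtype_coe.pow_const _).real_toNNReal),
          integral_subtype_comap measurableSet_Ioi fun a => Real.toNNReal (a ^ (N - 1)) • g a]
        have h1 : ∀ r ∈ Set.Ioi (0 : ℝ), Real.toNNReal (r ^ (N - 1)) • g r =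
            (Set.Iio 1).indicator (fun r : ℝ => r ^ ((N : ℝ) + p + q - 1)) r := by
          intro r hr
          have hr : 0 < r := hr
          rw [NNReal.smul_def, Real.coe_toNNReal _ (by positivity)]
          by_cases h1 : r < 1
          · simp only [g]
            rw [Set.indicator_of_mem (by simpa using h1), Set.indicator_of_mem (by simpa using h1),
              smul_eq_mul, ← Real.rpow_natCast, ← Real.rpow_add hr]
            congr 1
            push_cast [hN]
            ring
          · simp only [g]
            rw [Set.indicator_of_notMem (by simpa using h1),
              Set.indicator_of_notMem (by simpa using h1), smul_zero]
        rw [setIntegral_congr_fun measurableSet_Ioi h1, setIntegral_indicator measurableSet_Iio,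
          Set.Ioi_inter_Iio, ← integral_Ioc_eq_integral_Ioo,
          ← intervalIntegral.integral_of_le zero_le_one, integral_rpow (Or.inl (by linarith))]
        rw [sub_add_cancel, Real.one_rpow, Real.zero_rpow hNpq.ne']
        simp

/-- By rotation invariance (a reflection sends `v` to `‖v‖ • e`), the moment in an arbitrary direction
reduces to `polar_moment_unit`. -/
theorem polar_moment {N : ℕ} (hN : 1 ≤ N) {p q : ℝ} (hNpq : 0 < (N : ℝ) + p + q)
    {e : Euc N} (he : ‖e‖ = 1) (v : Euc N) :
    ∫ z in ball (0 : Euc N) 1, |⟪v, z⟫| ^ p * ‖z‖ ^ q =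
      ‖v‖ ^ p * (sphereK N p e / ((N : ℝ) + p + q)) := by
  set R := (ℝ ∙ (v - ‖v‖ • e))ᗮ.reflection with hR
  have hRv : R v = ‖v‖ • e := Submodule.reflection_sub (by simp [norm_smul, he])
  rw [← polar_moment_unit hN hNpq e, ← integral_const_mul,
    ← (LinearIsometryEquiv.measurePreserving R).setIntegral_preimage_emb
      R.toHomeomorph.measurableEmbedding _ (ball 0 1)]
  have hpre : R ⁻¹' ball 0 1 = ball 0 1 := by ext z; simp
  rw [hpre]
  refine setIntegral_congr_fun measurableSet_ball fun z _ => ?_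
  have h1 : ⟪v, R z⟫ = ‖v‖ * ⟪z, e⟫ := by
    rw [← LinearIsometryEquiv.inner_map_map R v (R z), hRv, hR, Submodule.reflection_reflection,
      real_inner_smul_left, real_inner_comm]
  simp only [h1, LinearIsometryEquiv.norm_map]
  rw [abs_mul, abs_norm, Real.mul_rpow (norm_nonneg _) (abs_nonneg _), mul_assoc]

theorem setIntegral_ball_rescale {N : ℕ} (x : Euc N) {δ : ℝ} (hδ : 0 < δ) (f : Euc N → ℝ) :
    ∫ y in ball x δ, f y = δ ^ N * ∫ z in ball (0 : Euc N) 1, f (x + δ • z) := by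
  have h := Measure.setIntegral_comp_smul_of_pos (volume : Measure (Euc N))
    (fun y => f (x + y)) (ball 0 1) hδ
  rw [smul_unitBall_of_pos hδ] at h
  rw [h, finrank_euclideanSpace_fin, smul_eq_mul, mul_inv_cancel_left₀ (by positivity),
    ← (measurePreserving_add_left volume x).setIntegral_preimage_emb
      (measurableEmbedding_addLeft x) f (ball x δ)]
  congr 2
  ext z
  simp

/-! ### The rescaled integrand -/

/-- The integrand `G(|u(x) - u(x + δz)|) / G(δ) * J(δ|z|) / J(δ)` obtained from the energy density
by the substitution `y = x + δz`. The kernel is set to `0` at the origin so as to be measurable. -/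
noncomputable def rescaledDensity {N : ℕ} (G J : ℝ → ℝ) (u : Euc N → ℝ) (δ : ℝ) (x z : Euc N) :
    ℝ :=
  G |u x - u (x + δ • z)| / G δ * ((Set.Ioi 0).indicator J (δ * ‖z‖) / J δ)

theorem rescaledDensity_of_ne {N : ℕ} {G J : ℝ → ℝ} {u : Euc N → ℝ} {δ : ℝ} (hδ : 0 < δ)
    {x z : Euc N} (hz : z ≠ 0) :
    rescaledDensity G J u δ x z = G |u x - u (x + δ • z)| / G δ * (J (δ * ‖z‖) / J δ) := by
  rw [rescaledDensity, Set.indicator_of_mem]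
  exact mul_pos hδ (norm_pos_iff.2 hz)

theorem measurable_rescaledDensity {N : ℕ} {G J : ℝ → ℝ} {u : Euc N → ℝ}
    (hG : ContinuousOn G (Set.Ici 0)) (hJ : ContinuousOn J (Set.Ioi 0)) (hu : Continuous u)
    (δ : ℝ) : Measurable fun w : Euc N × Euc N => rescaledDensity G J u δ w.1 w.2 := by
  classical
  have h1 : Continuous fun w : Euc N × Euc N => G |u w.1 - u (w.1 + δ • w.2)| :=
    hG.comp_continuous (by fun_prop) fun w => Set.mem_Ici.2 (abs_nonneg _)
  have h2 : Measurable ((Set.Ioi (0 : ℝ)).indicator J) := by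
    rw [← Set.piecewise_eq_indicator]
    exact hJ.measurable_piecewise continuousOn_const measurableSet_Ioi
  unfold rescaledDensity
  refine (h1.measurable.div_const _).mul (Measurable.div_const ?_ _)
  exact h2.comp (by fun_prop : Measurable fun w : Euc N × Euc N => δ * ‖w.2‖)

/-- The substitution `y = x + δz`; the Jacobian `δ ^ N` cancels against the normalization. -/
theorem energy_rescale {N : ℕ} (hN : 1 ≤ N) {G J : ℝ → ℝ} (u : Euc N → ℝ) {δ : ℝ} (hδ : 0 < δ)
    (hGδ : 0 < G δ) (hJδ : 0 < J δ) (c : ℝ) :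
    c / (G δ * J δ * δ ^ (N : ℝ)) * ∫ x, ∫ y in ball x δ, G |u x - u y| * J ‖x - y‖ =
      c * ∫ x, ∫ z in ball (0 : Euc N) 1, rescaledDensity G J u δ x z := by
  have : Nonempty (Fin N) := ⟨⟨0, hN⟩⟩
  have h : ∀ x, ∫ y in ball x δ, G |u x - u y| * J ‖x - y‖ =
      G δ * J δ * δ ^ (N : ℝ) * ∫ z in ball (0 : Euc N) 1, rescaledDensity G J u δ x z := by
    intro x
    rw [setIntegral_ball_rescale x hδ, Real.rpow_natCast, mul_comm (G δ * J δ), mul_assoc,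
      ← integral_const_mul (G δ * J δ)]
    congr 1
    refine setIntegral_congr_ae measurableSet_ball ?_
    filter_upwards [compl_mem_ae_iff.2 (measure_singleton (0 : Euc N))] with z hz _
    have hz : z ≠ 0 := hz
    rw [rescaledDensity_of_ne hδ hz, sub_add_cancel_left, norm_neg, norm_smul,
      Real.norm_of_nonneg hδ.le]
    field_simp
  simp_rw [h]
  rw [integral_const_mul]
  have : 0 < δ ^ (N : ℝ) := Real.rpow_pos_of_pos hδ _
  field_simp

theorem tendsto_rescaledDensity {N : ℕ} {G J : ℝ → ℝ} {p q : ℝ} (hp : 0 < p)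
    (hmono : MonotoneOn G (Set.Ici 0)) (hpos : ∀ t > 0, 0 < G t) (h0 : 0 ≤ G 0)
    (hG : RegVaryAtZero G p) (hJ : RegVaryAtZero J q) {u : Euc N → ℝ} {x z : Euc N} (hz : z ≠ 0)
    (hu : DifferentiableAt ℝ u x) :
    Tendsto (fun δ => rescaledDensity G J u δ x z) (𝓝[>] 0)
      (𝓝 (|⟪gradient u x, z⟫| ^ p * ‖z‖ ^ q)) := by
  have hself : ∀ᶠ t : ℝ in 𝓝[>] 0, 0 < t := self_mem_nhdsWithin
  have hline : HasDerivAt (fun t : ℝ => u (x + t • z)) ⟪gradient u x, z⟫ 0 := by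
    have h1 : HasFDerivAt u (fderiv ℝ u x) (x + (0 : ℝ) • z) := by simpa using hu.hasFDerivAt
    have h2 : HasDerivAt (fun t : ℝ => x + t • z) z 0 := by
      simpa using ((hasDerivAt_id (0 : ℝ)).smul_const z).const_add x
    have h3 := h1.comp_hasDerivAt (0 : ℝ) h2
    rwa [show fderiv ℝ u x z = ⟪gradient u x, z⟫ by simp [gradient]] at h3
  have ha : Tendsto (fun t : ℝ => |t⁻¹ * (u (x + t • z) - u x)|) (𝓝[>] 0)
      (𝓝 |⟪gradient u x, z⟫|) := by
    have h1 := hline.tendsto_slope_zero_right.abs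
    simpa using h1
  have h1 := regVary_comp_tendsto hp hmono hpos h0 hG ha (fun t _ => abs_nonneg _) (abs_nonneg _)
  refine (h1.mul (hJ ‖z‖ (norm_pos_iff.2 hz))).congr' ?_
  filter_upwards [hself] with δ hδ
  rw [rescaledDensity_of_ne hδ hz, abs_mul, abs_of_pos (inv_pos.2 hδ), mul_comm δ, abs_sub_comm,
    mul_assoc, mul_comm _ δ, inv_mul_cancel_left₀ hδ.ne']

/-- The dominating function: the Lipschitz bound and the doubling condition replace
`|u(x) - u(x + δz)|` by `δ|z|` at the cost of a constant, and `potter` applies to `G * J`, which is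
regularly varying of index `p + q`. -/
theorem rescaledDensity_bound {N : ℕ} {G J : ℝ → ℝ} {p q ε : ℝ} (hGO : IsOrlicz G)
    (hpos : ∀ t > 0, 0 < G t) (hG : RegVaryAtZero G p) (hJpos : ∀ t > 0, 0 < J t)
    (hJcont : ContinuousOn J (Set.Ioi 0)) (hJ : RegVaryAtZero J q) (hε : 0 < ε)
    {u : Euc N → ℝ} {L : ℝ≥0} (hL : LipschitzWith L u) :
    ∃ D ≥ 0, ∃ t₀ > 0, ∀ δ, 0 < δ → δ ≤ t₀ → δ ≤ 1 → ∀ x z : Euc N, z ≠ 0 → ‖z‖ < 1 →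
      ‖rescaledDensity G J u δ x z‖ ≤
        (cthickening 1 (tsupport u)).indicator (fun _ => D * ‖z‖ ^ (p + q - ε)) x := by
  obtain ⟨C, hC0, hC⟩ := doubling_bound hGO L.coe_nonneg
  obtain ⟨hGnn, hGcont, -, hGmono, hG0, -, -⟩ := hGO
  have hHpos : ∀ t > 0, 0 < G t * J t := fun t ht => mul_pos (hpos t ht) (hJpos t ht)
  have hH : RegVaryAtZero (fun t => G t * J t) (p + q) := by
    intro lam hlam
    rw [Real.rpow_add hlam]
    exact ((hG lam hlam).mul (hJ lam hlam)).congr fun t => by rw [div_mul_div_comm]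
  obtain ⟨t₀, ht₀, hpot⟩ := potter hHpos
    ((hGcont.mono Set.Ioi_subset_Ici_self).mul hJcont) hH hε
  refine ⟨C * Real.exp 2, by positivity, t₀, ht₀, fun δ hδ hδt hδ1 x z hz hz1 => ?_⟩
  have hz0 : 0 < ‖z‖ := norm_pos_iff.2 hz
  have hGδ := hpos δ hδ
  have hJδ := hJpos δ hδ
  have hJz := hJpos (δ * ‖z‖) (by positivity)
  rw [rescaledDensity_of_ne hδ hz]
  by_cases hx : x ∈ cthickening 1 (tsupport u)
  · rw [Set.indicator_of_mem hx, Real.norm_of_nonneg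
      (mul_nonneg (div_nonneg (hGnn _ (abs_nonneg _)) hGδ.le) (by positivity))]
    have h1 : |u x - u (x + δ • z)| ≤ L * (‖z‖ * δ) := by
      have := hL.dist_le_mul x (x + δ • z)
      rwa [Real.dist_eq, dist_self_add_right, norm_smul, Real.norm_of_nonneg hδ.le,
        mul_comm δ] at this
    have h2 : G |u x - u (x + δ • z)| ≤ C * G (‖z‖ * δ) :=
      (hGmono.monotoneOn (Set.mem_Ici.2 (abs_nonneg _)) (show (0 : ℝ) ≤ L * (‖z‖ * δ) by positivity) h1).trans
        (hC _ (by positivity))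
    have h3 := hpot δ hδ hδt ‖z‖ hz0 hz1.le
    rw [div_mul_div_comm, div_le_iff₀ (by positivity)]
    rw [mul_comm δ] at hJz ⊢
    calc _ ≤ C * G (‖z‖ * δ) * J (‖z‖ * δ) := by gcongr
      _ = C * (G (‖z‖ * δ) * J (‖z‖ * δ)) := by ring
      _ ≤ C * (Real.exp 2 * ‖z‖ ^ (p + q - ε) * (G δ * J δ)) := by gcongr
      _ = _ := by ring
  · have h1 : ∀ y, dist x y ≤ 1 → u y = 0 := fun y hy => by
      by_contra hne
      exact hx (mem_cthickening_of_dist_le x y 1 _ (subset_tsupport u hne) hy)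
    rw [Set.indicator_of_notMem hx, h1 x (by simp), h1 (x + δ • z), sub_zero, abs_zero, hG0]
    · simp
    · rw [dist_self_add_right, norm_smul, Real.norm_of_nonneg hδ.le]
      nlinarith

/-- **Localization with a general regularly varying kernel** (Proposition 3.3 / `prop:correa`). -/
theorem kernel_localization
    (N : ℕ) (hN : 1 ≤ N) (G : ℝ → ℝ) (p : ℝ) (hp : 1 < p) (hG : HypH G p)
    (J : ℝ → ℝ) (hJpos : ∀ t > (0:ℝ), 0 < J t) (hJcont : ContinuousOn J (Set.Ioi 0))
    (q : ℝ) (hJq : RegVaryAtZero J q) (hNpq : 0 < (N : ℝ) + p + q)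
    (u : Euc N → ℝ) (hu : ContDiff ℝ 2 u) (husupp : HasCompactSupport u)
    (e : Euc N) (he : ‖e‖ = 1) :
    Tendsto (fun δ : ℝ => (((N : ℝ) + p + q) / (G δ * J δ * δ ^ (N : ℝ))) *
        ∫ x, ∫ y in ball x δ, G |u x - u y| * J ‖x - y‖)
      (𝓝[>] (0:ℝ))
      (𝓝 (sphereK N p e * ∫ x, ‖gradient u x‖ ^ p)) := by
  have : Nonempty (Fin N) := ⟨⟨0, hN⟩⟩
  obtain ⟨hGO, hGp, -, -⟩ := hG
  have hp0 : 0 < p := by linarith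
  obtain ⟨-, hGcont, -, hGmono, hG0, -, -⟩ := id hGO
  have hGpos : ∀ t > 0, 0 < G t := fun t ht => by
    simpa [hG0] using hGmono Set.self_mem_Ici (Set.mem_Ici.2 (le_of_lt ht)) ht
  obtain ⟨L, hL⟩ := ContDiff.lipschitzWith_of_hasCompactSupport husupp hu two_ne_zero
  set S := (N : ℝ) + p + q with hS
  obtain ⟨D, hD, t₀, ht₀, hbound⟩ :=
    rescaledDensity_bound hGO hGpos hGp hJpos hJcont hJq (half_pos hNpq) hL
  have hδ : ∀ᶠ δ : ℝ in 𝓝[>] 0, 0 < δ := self_mem_nhdsWithin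
  have hδ1 : ∀ᶠ δ : ℝ in 𝓝[>] 0, δ ≤ t₀ ∧ δ ≤ 1 :=
    ((eventually_le_nhds ht₀).and (eventually_le_nhds one_pos)).filter_mono nhdsWithin_le_nhds
  have hne : ∀ᵐ z : Euc N ∂(volume.restrict (ball 0 1)), z ≠ 0 ∧ ‖z‖ < 1 := by
    refine (ae_restrict_iff' measurableSet_ball).2 ?_
    filter_upwards [compl_mem_ae_iff.2 (measure_singleton (0 : Euc N))] with z hz hz1
    exact ⟨hz, by simpa using hz1⟩
  have hmeas := measurable_rescaledDensity hGcont hJcont hu.continuous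
  -- The exponent `p + q - S / 2` exceeds `-N` because `S = N + p + q > 0`.
  have hint : IntegrableOn (fun z : Euc N => D * ‖z‖ ^ (p + q - S / 2)) (ball 0 1) := by
    refine integrableOn_ball_of_norm_le_rpow (by simpa using hN) (C := D)
      (α := -(p + q - S / 2)) (by simp; linarith) (Eventually.of_forall fun z => ?_)
      ((measurable_norm.pow_const _).const_mul D).aestronglyMeasurable
    rw [neg_neg, Real.norm_of_nonneg (by positivity)]
  set M := ∫ z in ball (0 : Euc N) 1, D * ‖z‖ ^ (p + q - S / 2)
  have hinner : ∀ x, Tendsto (fun δ => ∫ z in ball (0 : Euc N) 1, rescaledDensity G J u δ x z)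
      (𝓝[>] 0) (𝓝 (‖gradient u x‖ ^ p * (sphereK N p e / S))) := by
    intro x
    rw [← polar_moment hN hNpq he]
    refine tendsto_integral_filter_of_dominated_convergence
      (fun z => D * ‖z‖ ^ (p + q - S / 2)) (Eventually.of_forall fun δ => ?_) ?_ hint ?_
    · exact ((hmeas δ).comp measurable_prodMk_left).aestronglyMeasurable
    · filter_upwards [hδ, hδ1] with δ h0 h1
      filter_upwards [hne] with z hz
      refine (hbound δ h0 h1.1 h1.2 x z hz.1 hz.2).trans (Set.indicator_le_self' ?_ x)
      intros; positivity
    · filter_upwards [hne] with z hz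
      exact tendsto_rescaledDensity hp0 hGmono.monotoneOn hGpos hG0.ge hGp hJq hz.1
        (hu.differentiable two_ne_zero x)
  have hmain : Tendsto
      (fun δ => S * ∫ x, ∫ z in ball (0 : Euc N) 1, rescaledDensity G J u δ x z)
      (𝓝[>] 0) (𝓝 (S * ∫ x, ‖gradient u x‖ ^ p * (sphereK N p e / S))) := by
    refine Tendsto.const_mul _ (tendsto_integral_filter_of_dominated_convergence
      ((cthickening 1 (tsupport u)).indicator fun _ => M)
      (Eventually.of_forall fun δ => ?_) ?_ ?_ (Eventually.of_forall hinner))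
    · exact ((hmeas δ).stronglyMeasurable.integral_prod_right'
        (ν := volume.restrict (ball 0 1))).aestronglyMeasurable
    · filter_upwards [hδ, hδ1] with δ h0 h1
      refine Eventually.of_forall fun x => ?_
      have hb := hbound δ h0 h1.1 h1.2 x
      by_cases hx : x ∈ cthickening 1 (tsupport u)
      · rw [Set.indicator_of_mem hx]
        refine norm_integral_le_of_norm_le hint ?_
        filter_upwards [hne] with z hz
        simpa only [Set.indicator_of_mem hx] using hb z hz.1 hz.2
      · rw [Set.indicator_of_notMem hx]
        refine (norm_integral_le_of_norm_le (integrable_zero _ ℝ _) ?_).trans (by simp)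
        filter_upwards [hne] with z hz
        simpa only [Set.indicator_of_notMem hx, Pi.zero_apply] using hb z hz.1 hz.2
    · have hK : IsCompact (cthickening 1 (tsupport u)) := husupp.isCompact.cthickening
      exact (integrable_indicator_iff hK.measurableSet).2
        (integrableOn_const hK.measure_lt_top.ne)
  have hval : S * ∫ x, ‖gradient u x‖ ^ p * (sphereK N p e / S) =
      sphereK N p e * ∫ x, ‖gradient u x‖ ^ p := by
    rw [integral_mul_const]
    field_simp
  rw [← hval]
  refine hmain.congr' ?_
  filter_upwards [hδ] with δ h0
  exact (energy_rescale hN u h0 (hGpos δ h0) (hJpos δ h0) S).symm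
end

section
/- Let N ≥ 1, δ > 0, 0 < s < 1, and let G be an Orlicz function. Let u ∈ L¹_loc(ℝ^N) have a weak gradient V ∈ L¹_loc(ℝ^N; ℝ^N), i.e. ∫ u ∂φ/∂x_i dx = −∫ V_i φ dx for every φ ∈ C_c^∞(ℝ^N) and every i = 1,…,N. Then Ψ_{s,G,δ}(u) ≤ [N ω_N/(1−s)] ∫_{ℝ^N} G(δ^{1−s} |V(x)|) dx, where ω_N = σ(𝕊^{N−1}) is the surface area of the unit sphere in ℝ^N. -/
/-!
The estimate is proved one shift at a time. With `y = x + h` and Tonelli, the energy is the integral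
over `‖h‖ < δ` of `‖h‖^{-N} ∫ G(|u(x) - u(x+h)| / ‖h‖^s) dx`, so it suffices to show
`∫ G(|u(x) - u(x+h)| / ‖h‖^s) dx ≤ (‖h‖/δ)^{1-s} ∫ G(δ^{1-s} |V|)` for fixed `h ≠ 0`
(`slice_energy_le`) and to integrate `(‖h‖/δ)^{1-s} ‖h‖^{-N}` over the ball in polar coordinates
(`radial`).

For a mollification `u * ρ`, whose gradient is `V * ρ` (`fderiv_moll_apply`), the fundamental theorem
of calculus gives `|(u*ρ)(x) - (u*ρ)(x+h)| ≤ ‖h‖ ∫₀¹ (|V|*ρ)(x+th) dt`. Jensen's inequality, the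
bound `G(r t) ≤ r G(t)` for `r = (‖h‖/δ)^{1-s} ≤ 1`, and translation invariance give the slice
estimate with `|V| * ρ` on the right (`moll_energy_le`), and a second use of Jensen replaces
`|V| * ρ` by `|V|` (`moll_le`). Since `u * ρ_n → u` almost everywhere along suitable mollifiers
(`exists_mollifiers`), Fatou's lemma transfers the estimate to `u`.
-/

open MeasureTheory Metric Filter Set
open scoped ENNReal RealInnerProductSpace Topology NNReal

/-! ### Orlicz functions and Jensen's inequality -/

/-- The properties of an Orlicz function used in the estimate, stated for a function on all of `ℝ`
whose values on `(-∞, 0)` play no role. Working with `fun t => G |t|` instead of `G` makes it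
globally continuous, hence measurable. -/
structure IsGauge (H : ℝ → ℝ) : Prop where
  nonneg : ∀ t, 0 ≤ H t
  cont : Continuous H
  convex : ConvexOn ℝ (Ici 0) H
  mono : MonotoneOn H (Ici 0)
  zero : H 0 = 0

lemma IsOrlicz.isGauge {G : ℝ → ℝ} (hG : IsOrlicz G) : IsGauge (fun t => G |t|) := by
  obtain ⟨h1, h2, h3, h4, h5, -⟩ := hG
  have e : ∀ t ∈ Ici (0:ℝ), G t = G |t| := fun t ht => by rw [abs_of_nonneg ht]
  refine ⟨fun t => h1 _ (abs_nonneg t), ?_, h3.congr e, h4.monotoneOn.congr e, by simp [h5]⟩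
  exact h2.comp_continuous continuous_abs fun t => abs_nonneg t

lemma IsGauge.scale {H : ℝ → ℝ} (hH : IsGauge H) {a t : ℝ} (ha : 0 ≤ a) (ha1 : a ≤ 1)
    (ht : 0 ≤ t) : H (a * t) ≤ a * H t := by
  have := hH.convex.2 (x := t) (y := 0) ht (by simp) ha (by linarith : 0 ≤ 1 - a) (by ring)
  simpa [hH.zero] using this

/-- Jensen's inequality in `ℝ≥0∞`; no integrability of `H ∘ f` is needed, as otherwise the
right-hand side is `∞`. -/
lemma IsGauge.jensen {H : ℝ → ℝ} (hH : IsGauge H) {α : Type*} [MeasurableSpace α]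
    {μ : Measure α} [IsProbabilityMeasure μ] {f : α → ℝ} (hf : Integrable f μ)
    (h0 : ∀ x, 0 ≤ f x) :
    ENNReal.ofReal (H (∫ x, f x ∂μ)) ≤ ∫⁻ x, ENNReal.ofReal (H (f x)) ∂μ := by
  by_cases hfin : ∫⁻ x, ENNReal.ofReal (H (f x)) ∂μ = ∞
  · simp [hfin]
  have hm : AEStronglyMeasurable (fun x => H (f x)) μ := hH.cont.comp_aestronglyMeasurable hf.1
  have hi : Integrable (fun x => H (f x)) μ :=
    (lintegral_ofReal_ne_top_iff_integrable hm (.of_forall fun x => hH.nonneg _)).1 hfin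
  rw [← ofReal_integral_eq_lintegral_ofReal hi (.of_forall fun x => hH.nonneg _)]
  exact ENNReal.ofReal_le_ofReal
    (hH.convex.map_integral_le hH.cont.continuousOn isClosed_Ici (.of_forall h0) hf hi)

/-! ### Mollification -/

/-- A smooth compactly supported probability density on `ℝ^N`. -/
structure IsMollifier {N : ℕ} (ρ : Euc N → ℝ) : Prop where
  smooth : ContDiff ℝ (⊤ : ℕ∞) ρ
  supp : HasCompactSupport ρ
  nonneg : ∀ x, 0 ≤ ρ x
  integral : ∫ x, ρ x = 1

/-- The mollification `f * ρ`, written as an explicit integral. -/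
noncomputable def moll {N : ℕ} (ρ f : Euc N → ℝ) (x : Euc N) : ℝ := ∫ t, f t * ρ (x - t)

lemma moll_eq {N : ℕ} (ρ f : Euc N → ℝ) :
    moll ρ f = convolution f ρ (ContinuousLinearMap.mul ℝ ℝ) volume := rfl

lemma integrable_mul_translate {N : ℕ} {ρ f : Euc N → ℝ} (hρ : IsMollifier ρ)
    (hf : LocallyIntegrable f volume) (x : Euc N) : Integrable (fun t => f t * ρ (x - t)) := by
  have := hf.integrable_smul_right_of_hasCompactSupport (g := fun t => ρ (x - t))
    (hρ.smooth.continuous.comp (by fun_prop))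
    (hρ.supp.comp_homeomorph (Homeomorph.subLeft x))
  simpa [smul_eq_mul] using this

/-- Mollification does not increase the modular: apply Jensen with the probability measure
`ρ(t) dt`, then Tonelli and translation invariance. -/
lemma moll_le {N : ℕ} {ρ : Euc N → ℝ} (hρ : IsMollifier ρ) {H : ℝ → ℝ} (hH : IsGauge H)
    {f : Euc N → ℝ} (hf : LocallyIntegrable f volume) (hm : Measurable f) (h0 : ∀ x, 0 ≤ f x)
    {c : ℝ} (hc : 0 ≤ c) :
    ∫⁻ x, ENNReal.ofReal (H (c * moll ρ f x)) ≤ ∫⁻ x, ENNReal.ofReal (H (c * f x)) := by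
  have hρm : Measurable ρ := hρ.smooth.continuous.measurable
  have hρi : Integrable ρ := hρ.smooth.continuous.integrable_of_hasCompactSupport hρ.supp
  have hρ1 : ∫⁻ x, ENNReal.ofReal (ρ x) = 1 := by
    rw [← ofReal_integral_eq_lintegral_ofReal hρi (.of_forall hρ.nonneg), hρ.integral]; simp
  have hHm : Measurable H := hH.cont.measurable
  let μ : Measure (Euc N) := volume.withDensity fun t => ENNReal.ofReal (ρ t)
  have : IsProbabilityMeasure μ := ⟨by simp [μ, hρ1]⟩
  have key : ∀ x, ENNReal.ofReal (H (c * moll ρ f x)) ≤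
      ∫⁻ t, ENNReal.ofReal (ρ t) * ENNReal.ofReal (H (c * f (x - t))) := by
    intro x
    have hi : Integrable (fun t => f (x - t) * ρ t) := by
      simpa using (integrable_mul_translate hρ hf x).comp_sub_left x
    have e1 : c * moll ρ f x = ∫ t, c * f (x - t) ∂μ := by
      rw [integral_const_mul]
      congr 1
      rw [integral_withDensity_eq_integral_toReal_smul (by fun_prop) (by simp)]
      rw [moll, ← integral_sub_left_eq_self _ _ x]
      refine integral_congr_ae (.of_forall fun t => ?_)
      simp [ENNReal.toReal_ofReal (hρ.nonneg t), mul_comm]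
    have hi2 : Integrable (fun t => c * f (x - t)) μ := by
      refine Integrable.const_mul ?_ c
      rw [integrable_withDensity_iff_integrable_smul' (by fun_prop) (by simp)]
      refine hi.congr (.of_forall fun t => ?_)
      simp [ENNReal.toReal_ofReal (hρ.nonneg t), mul_comm]
    rw [e1]
    refine (hH.jensen hi2 fun t => mul_nonneg hc (h0 _)).trans_eq ?_
    rw [lintegral_withDensity_eq_lintegral_mul _ (by fun_prop) (by fun_prop)]
    rfl
  calc _ ≤ ∫⁻ x, ∫⁻ t, ENNReal.ofReal (ρ t) * ENNReal.ofReal (H (c * f (x - t))) :=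
        lintegral_mono key
    _ = ∫⁻ t, ∫⁻ x, ENNReal.ofReal (ρ t) * ENNReal.ofReal (H (c * f (x - t))) :=
        lintegral_lintegral_swap (by fun_prop)
    _ = ∫⁻ t, ENNReal.ofReal (ρ t) * ∫⁻ x, ENNReal.ofReal (H (c * f x)) := by
        refine lintegral_congr fun t => ?_
        rw [lintegral_const_mul _ (by fun_prop)]
        rw [lintegral_sub_right_eq_self (fun x => ENNReal.ofReal (H (c * f x))) t]
    _ = _ := by
        rw [lintegral_mul_const _ (by fun_prop), hρ1, one_mul]

lemma HasWeakGradient.locallyIntegrable_norm {N : ℕ} {u : Euc N → ℝ} {V : Euc N → Euc N}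
    (hV : HasWeakGradient N u V) : LocallyIntegrable (fun x => ‖V x‖) volume :=
  fun x => (hV.2.1 x).norm

lemma moll_contDiff {N : ℕ} {ρ f : Euc N → ℝ} (hρ : IsMollifier ρ)
    (hf : LocallyIntegrable f volume) : ContDiff ℝ 1 (moll ρ f) := by
  have := hρ.supp.contDiff_convolution_right (ContinuousLinearMap.mul ℝ ℝ) (n := 1) hf
    (hρ.smooth.of_le (by exact_mod_cast le_top))
  exact_mod_cast this

lemma moll_nonneg {N : ℕ} {ρ f : Euc N → ℝ} (hρ : IsMollifier ρ) (h0 : ∀ x, 0 ≤ f x) (x : Euc N) :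
    0 ≤ moll ρ f x :=
  integral_nonneg fun _ => mul_nonneg (h0 _) (hρ.nonneg _)

/-- The derivative of `u * ρ` is `V * ρ`: differentiate the kernel and use `t ↦ ρ (x - t)` as a
test function in the definition of the weak gradient. -/
lemma fderiv_moll_apply {N : ℕ} {ρ : Euc N → ℝ} (hρ : IsMollifier ρ) {u : Euc N → ℝ}
    {V : Euc N → Euc N} (hV : HasWeakGradient N u V) (x v : Euc N) :
    fderiv ℝ (moll ρ u) x v = ∫ t, ⟪V t, v⟫ * ρ (x - t) := by
  obtain ⟨hu, hVi, hw⟩ := hV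
  have hρ1 : ContDiff ℝ 1 ρ := hρ.smooth.of_le (by exact_mod_cast le_top)
  have hcoord : ∀ i, LocallyIntegrable (fun t => V t i) volume := fun i =>
    (hVi.mono (by
      have := hVi.aestronglyMeasurable
      exact (EuclideanSpace.proj (𝕜 := ℝ) i).continuous.comp_aestronglyMeasurable this)
      (.of_forall fun t => by simpa using PiLp.norm_apply_le (V t) i))
  have hD : ∀ w, fderiv ℝ (moll ρ u) x w = ∫ t, u t * fderiv ℝ ρ (x - t) w := by
    intro w
    rw [moll_eq, (hρ.supp.hasFDerivAt_convolution_right _ hu hρ1 x).fderiv,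
      convolution_precompR_apply _ hu (hρ.supp.fderiv ℝ) (hρ1.continuous_fderiv one_ne_zero)]
    rfl
  have hbasis : ∀ i, fderiv ℝ (moll ρ u) x (EuclideanSpace.single i 1) =
      ∫ t, V t i * ρ (x - t) := by
    intro i
    have hφ := hw (fun t => ρ (x - t)) (hρ.smooth.comp (by fun_prop))
      (hρ.supp.comp_homeomorph (Homeomorph.subLeft x)) i
    have e : ∀ t, fderiv ℝ (fun t => ρ (x - t)) t (EuclideanSpace.single i 1) =
        - fderiv ℝ ρ (x - t) (EuclideanSpace.single i 1) := by
      intro t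
      have h1 : HasFDerivAt (fun t : Euc N => x - t) (-ContinuousLinearMap.id ℝ (Euc N)) t :=
        (hasFDerivAt_id t).const_sub x
      have h2 := ((hρ1.differentiable one_ne_zero) (x - t)).hasFDerivAt.comp t h1
      have h3 : fderiv ℝ (fun t => ρ (x - t)) t = _ := h2.fderiv
      rw [h3]; simp
    simp only [e, mul_neg, integral_neg] at hφ
    rw [hD]; linarith
  have hv : v = ∑ i, v i • EuclideanSpace.single i (1:ℝ) := by
    ext j; simp [Finset.sum_apply, Pi.single_apply]
  conv_lhs => rw [hv, map_sum]
  simp only [map_smul, hbasis, smul_eq_mul, ← integral_const_mul]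
  rw [← integral_finsetSum _ fun i _ => (integrable_mul_translate hρ (hcoord i) x).const_mul _]
  refine integral_congr_ae (.of_forall fun t => ?_)
  simp only [PiLp.inner_apply, Finset.sum_mul]
  refine Finset.sum_congr rfl fun i _ => ?_
  simp; ring

lemma norm_fderiv_moll_le {N : ℕ} {ρ : Euc N → ℝ} (hρ : IsMollifier ρ) {u : Euc N → ℝ}
    {V : Euc N → Euc N} (hV : HasWeakGradient N u V) (x v : Euc N) :
    ‖fderiv ℝ (moll ρ u) x v‖ ≤ ‖v‖ * moll ρ (fun t => ‖V t‖) x := by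
  rw [fderiv_moll_apply hρ hV, moll, ← integral_const_mul]
  refine norm_integral_le_of_norm_le ((integrable_mul_translate hρ hV.locallyIntegrable_norm x).const_mul _)
    (.of_forall fun t => ?_)
  rw [norm_mul, Real.norm_of_nonneg (hρ.nonneg _), ← mul_assoc]
  have := hρ.nonneg (x - t)
  gcongr
  rw [mul_comm]
  exact norm_inner_le_norm _ _

lemma moll_sub_le {N : ℕ} {ρ : Euc N → ℝ} (hρ : IsMollifier ρ) {u : Euc N → ℝ}
    {V : Euc N → Euc N} (hV : HasWeakGradient N u V) (x h : Euc N) :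
    |moll ρ u x - moll ρ u (x + h)| ≤
      ‖h‖ * ∫ t in Ioc (0:ℝ) 1, moll ρ (fun t => ‖V t‖) (x + t • h) := by
  have hd := moll_contDiff hρ hV.1
  have hW : Continuous (moll ρ fun t => ‖V t‖) := (moll_contDiff hρ hV.locallyIntegrable_norm).continuous
  have hder : ∀ t ∈ uIcc (0:ℝ) 1, HasDerivAt (fun t : ℝ => moll ρ u (x + t • h))
      (fderiv ℝ (moll ρ u) (x + t • h) h) t := by
    intro t _
    have h1 : HasDerivAt (fun t : ℝ => x + t • h) h t := by
      simpa using ((hasDerivAt_id t).smul_const h).const_add x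
    exact ((hd.differentiable one_ne_zero) _).hasFDerivAt.comp_hasDerivAt t h1
  have hc : Continuous fun t : ℝ => fderiv ℝ (moll ρ u) (x + t • h) h :=
    ((hd.continuous_fderiv one_ne_zero).comp (by fun_prop)).clm_apply continuous_const
  have ftc := intervalIntegral.integral_eq_sub_of_hasDerivAt hder (hc.intervalIntegrable _ _)
  simp only [one_smul, zero_smul, add_zero] at ftc
  rw [abs_sub_comm, ← ftc, ← integral_const_mul, ← intervalIntegral.integral_of_le zero_le_one,
    ← Real.norm_eq_abs]
  refine intervalIntegral.norm_integral_le_of_norm_le zero_le_one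
    (.of_forall fun t _ => norm_fderiv_moll_le hρ hV _ _) ?_
  exact Continuous.intervalIntegrable (by fun_prop) _ _

/-! ### The estimate for a fixed shift -/

/-- The estimate for a fixed shift `h`, for the mollification of `u`. The factor
`(‖h‖ / δ) ^ (1 - s)` comes from `H (r * t) ≤ r * H t` for `r ∈ [0, 1]`. -/
lemma moll_energy_le {N : ℕ} {ρ : Euc N → ℝ} (hρ : IsMollifier ρ) {u : Euc N → ℝ}
    {V : Euc N → Euc N} (hV : HasWeakGradient N u V) (hVm : Measurable V)
    {H : ℝ → ℝ} (hH : IsGauge H) {s δ : ℝ} (hδ : 0 < δ) (hs1 : s < 1)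
    {h : Euc N} (h0 : h ≠ 0) (hh : ‖h‖ < δ) :
    ∫⁻ x, ENNReal.ofReal (H (|moll ρ u x - moll ρ u (x + h)| / ‖h‖ ^ s)) ≤
      ENNReal.ofReal ((‖h‖ / δ) ^ (1 - s)) * ∫⁻ x, ENNReal.ofReal (H (δ ^ (1 - s) * ‖V x‖)) := by
  have hpos : 0 < ‖h‖ := norm_pos_iff.2 h0
  have hs : 0 < 1 - s := by linarith
  set W := moll ρ (fun t => ‖V t‖) with hWdef
  have hW : Continuous W := (moll_contDiff hρ hV.locallyIntegrable_norm).continuous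
  have hW0 : ∀ x, 0 ≤ W x := moll_nonneg hρ fun x => norm_nonneg _
  have hHc := hH.cont
  set r := (‖h‖ / δ) ^ (1 - s) with hr
  have hr0 : 0 ≤ r := by positivity
  have hr1 : r ≤ 1 := Real.rpow_le_one (by positivity) ((div_le_one hδ).2 hh.le) hs.le
  have hrδ : ‖h‖ ^ (1 - s) = r * δ ^ (1 - s) := by
    rw [hr, Real.div_rpow hpos.le hδ.le]
    have : δ ^ (1 - s) ≠ 0 := by positivity
    field_simp
  let μ : Measure ℝ := volume.restrict (Ioc (0:ℝ) 1)
  have : IsProbabilityMeasure μ := ⟨by simp [μ]⟩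
  have key : ∀ x, ENNReal.ofReal (H (|moll ρ u x - moll ρ u (x + h)| / ‖h‖ ^ s)) ≤
      ENNReal.ofReal r * ∫⁻ t, ENNReal.ofReal (H (δ ^ (1 - s) * W (x + t • h))) ∂μ := by
    intro x
    have hc : Continuous fun t : ℝ => ‖h‖ ^ (1 - s) * W (x + t • h) := by fun_prop
    have hi : Integrable (fun t : ℝ => ‖h‖ ^ (1 - s) * W (x + t • h)) μ :=
      (hc.integrableOn_Icc (a := 0) (b := 1)).mono_set Ioc_subset_Icc_self
    have h1 : |moll ρ u x - moll ρ u (x + h)| / ‖h‖ ^ s ≤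
        ∫ t, ‖h‖ ^ (1 - s) * W (x + t • h) ∂μ := by
      rw [integral_const_mul, div_le_iff₀ (by positivity)]
      refine (moll_sub_le hρ hV x h).trans_eq ?_
      rw [mul_right_comm, ← Real.rpow_add hpos]
      simp [μ, hWdef]
    calc _ ≤ ENNReal.ofReal (H (∫ t, ‖h‖ ^ (1 - s) * W (x + t • h) ∂μ)) :=
          ENNReal.ofReal_le_ofReal (hH.mono (mem_Ici.2 (by positivity))
            (mem_Ici.2 (le_trans (by positivity) h1)) h1)
      _ ≤ ∫⁻ t, ENNReal.ofReal (H (‖h‖ ^ (1 - s) * W (x + t • h))) ∂μ :=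
          hH.jensen hi fun t => mul_nonneg (by positivity) (hW0 _)
      _ ≤ ∫⁻ t, ENNReal.ofReal r * ENNReal.ofReal (H (δ ^ (1 - s) * W (x + t • h))) ∂μ := by
          refine lintegral_mono fun t => ?_
          rw [← ENNReal.ofReal_mul hr0, hrδ, mul_assoc]
          exact ENNReal.ofReal_le_ofReal
            (hH.scale hr0 hr1 (mul_nonneg (by positivity) (hW0 _)))
      _ = _ := lintegral_const_mul _ (ENNReal.continuous_ofReal.comp (by fun_prop)).measurable
  calc _ ≤ ∫⁻ x, ENNReal.ofReal r *
          ∫⁻ t, ENNReal.ofReal (H (δ ^ (1 - s) * W (x + t • h))) ∂μ := lintegral_mono key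
    _ = ENNReal.ofReal r *
          ∫⁻ x, ∫⁻ t, ENNReal.ofReal (H (δ ^ (1 - s) * W (x + t • h))) ∂μ :=
        lintegral_const_mul' _ _ ENNReal.ofReal_ne_top
    _ = ENNReal.ofReal r *
          ∫⁻ t, ∫⁻ x, ENNReal.ofReal (H (δ ^ (1 - s) * W (x + t • h))) ∂volume ∂μ := by
        rw [lintegral_lintegral_swap]
        refine Measurable.aemeasurable (Continuous.measurable ?_)
        exact ENNReal.continuous_ofReal.comp (by fun_prop)
    _ = ENNReal.ofReal r * ∫⁻ x, ENNReal.ofReal (H (δ ^ (1 - s) * W x)) := by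
        have : ∀ t : ℝ, ∫⁻ x, ENNReal.ofReal (H (δ ^ (1 - s) * W (x + t • h))) =
            ∫⁻ x, ENNReal.ofReal (H (δ ^ (1 - s) * W x)) := fun t =>
          lintegral_add_right_eq_self (fun x => ENNReal.ofReal (H (δ ^ (1 - s) * W x))) (t • h)
        simp [this]
    _ ≤ _ := by
        refine mul_le_mul_right ?_ _
        exact moll_le hρ hH hV.locallyIntegrable_norm hVm.norm (fun x => norm_nonneg _) (by positivity)

lemma exists_mollifiers {N : ℕ} {u : Euc N → ℝ} (hu : LocallyIntegrable u volume) :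
    ∃ ρ : ℕ → Euc N → ℝ, (∀ n, IsMollifier (ρ n)) ∧
      ∀ᵐ x, Tendsto (fun n => moll (ρ n) u x) atTop (𝓝 (u x)) := by
  let φ : ℕ → ContDiffBump (0 : Euc N) := fun n =>
    ⟨1 / ((n : ℝ) + 1), 2 * (1 / ((n : ℝ) + 1)), by positivity, by
      have : 0 < 1 / ((n : ℝ) + 1) := by positivity
      linarith⟩
  refine ⟨fun n => (φ n).normed volume, fun n => ⟨(φ n).contDiff_normed,
    (φ n).hasCompactSupport_normed, (φ n).nonneg_normed, (φ n).integral_normed⟩, ?_⟩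
  have h1 : Tendsto (fun n => (φ n).rOut) atTop (𝓝 0) := by
    simpa [φ] using (tendsto_one_div_add_atTop_nhds_zero_nat (𝕜 := ℝ)).const_mul 2
  filter_upwards [ContDiffBump.ae_convolution_tendsto_right_of_locallyIntegrable (K := 2) h1
    (.of_forall fun n => le_rfl) hu] with x hx
  refine hx.congr fun n => ?_
  rw [convolution_lsmul_swap, moll]
  simp [mul_comm]

/-- The estimate for a fixed shift `h`, obtained from `moll_energy_le` by Fatou's lemma along
mollifications converging to `u` almost everywhere. -/
lemma slice_energy_le {N : ℕ} {u : Euc N → ℝ}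
    {V : Euc N → Euc N} (hV : HasWeakGradient N u V) (hVm : Measurable V)
    {H : ℝ → ℝ} (hH : IsGauge H) {s δ : ℝ} (hδ : 0 < δ) (hs1 : s < 1)
    {h : Euc N} (h0 : h ≠ 0) (hh : ‖h‖ < δ) :
    ∫⁻ x, ENNReal.ofReal (H (|u x - u (x + h)| / ‖h‖ ^ s)) ≤
      ENNReal.ofReal ((‖h‖ / δ) ^ (1 - s)) * ∫⁻ x, ENNReal.ofReal (H (δ ^ (1 - s) * ‖V x‖)) := by
  obtain ⟨ρ, hρ, hlim⟩ := exists_mollifiers hV.1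
  have hlim' : ∀ᵐ x, Tendsto (fun n => moll (ρ n) u (x + h)) atTop (𝓝 (u (x + h))) :=
    (measurePreserving_add_right volume h).quasiMeasurePreserving.ae hlim
  have hHc := hH.cont
  calc _ = ∫⁻ x, liminf (fun n => ENNReal.ofReal
          (H (|moll (ρ n) u x - moll (ρ n) u (x + h)| / ‖h‖ ^ s))) atTop := by
        refine lintegral_congr_ae ?_
        filter_upwards [hlim, hlim'] with x h1 h2
        refine (Tendsto.liminf_eq ?_).symm
        exact (ENNReal.continuous_ofReal.tendsto _).comp
          ((hHc.tendsto _).comp ((h1.sub h2).abs.div_const _))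
    _ ≤ liminf (fun n => ∫⁻ x, ENNReal.ofReal
          (H (|moll (ρ n) u x - moll (ρ n) u (x + h)| / ‖h‖ ^ s))) atTop := by
        refine lintegral_liminf_le fun n => Continuous.measurable ?_
        have := (moll_contDiff (hρ n) hV.1).continuous
        exact ENNReal.continuous_ofReal.comp (by fun_prop)
    _ ≤ _ := by
        refine liminf_le_of_le (by isBoundedDefault) fun b hb => ?_
        obtain ⟨n, hn⟩ := hb.exists
        exact hn.trans (moll_energy_le (hρ n) hV hVm hH hδ hs1 h0 hh)

lemma HasWeakGradient.congr {N : ℕ} {u u' : Euc N → ℝ} {V V' : Euc N → Euc N}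
    (hV : HasWeakGradient N u V) (hu : u =ᵐ[volume] u') (hVV : V =ᵐ[volume] V') :
    HasWeakGradient N u' V' := by
  refine ⟨hV.1.congr hu, hV.2.1.congr hVV, fun φ h1 h2 i => ?_⟩
  rw [← integral_congr_ae (hu.mono fun x hx => ?_), hV.2.2 φ h1 h2 i,
    integral_congr_ae (hVV.mono fun x hx => ?_)]
  · simp only [hx]
  · simp only [hx]

lemma PsiG_congr {N : ℕ} {s δ : ℝ} {G : ℝ → ℝ} {u u' : Euc N → ℝ} (hu : u =ᵐ[volume] u') :
    PsiG N s δ G u = PsiG N s δ G u' := by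
  refine lintegral_congr_ae (hu.mono fun x hx => ?_)
  refine lintegral_congr_ae ((ae_restrict_of_ae hu).mono fun y hy => ?_)
  simp only [hx, hy]

/-! ### The radial integral and the conclusion -/

/-- In polar coordinates the left-hand side is
`ω_N δ^{s-1} ∫₀^δ r^{-s} dr = ω_N / (1 - s)`, which is at most `N ω_N / (1 - s)` as `N ≥ 1`. -/
lemma radial (N : ℕ) (hN : 1 ≤ N) (δ : ℝ) (hδ : 0 < δ) (s : ℝ) (hs1 : s < 1) :
    ∫⁻ h in ball (0 : Euc N) δ, ENNReal.ofReal ((‖h‖ / δ) ^ (1 - s) / ‖h‖ ^ (N : ℝ)) ≤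
      ENNReal.ofReal ((N : ℝ) * sphereArea N / (1 - s)) := by
  have : Nonempty (Fin N) := ⟨⟨0, hN⟩⟩
  have : Nontrivial (Euc N) := inferInstance
  have hs : 0 < 1 - s := by linarith
  let f : ℝ → ℝ := fun y => (y / δ) ^ (1 - s) / y ^ (N : ℝ)
  have hf0 : ∀ y, 0 ≤ y → 0 ≤ f y := fun y hy => by positivity
  have e : ∀ y ∈ Ioo 0 δ, δ ^ (s - 1) * y ^ (-s) = y ^ (N - 1) • f y := by
    intro y hy
    have hy0 := hy.1
    simp only [f, smul_eq_mul]
    rw [Real.div_rpow hy0.le hδ.le, ← Real.rpow_natCast y (N - 1), Nat.cast_sub hN,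
      show s - 1 = -(1 - s) by ring, Real.rpow_neg hδ.le, div_div, mul_div_assoc',
      ← Real.rpow_add hy0, mul_comm (δ ^ (1 - s)), ← div_div, ← Real.rpow_sub hy0, div_eq_mul_inv,
      mul_comm]
    congr 2
    push_cast; ring
  have hint : IntegrableOn (fun y : ℝ => δ ^ (s - 1) * y ^ (-s)) (Ioo 0 δ) := by
    refine Integrable.const_mul ?_ _
    have := (intervalIntegral.intervalIntegrable_rpow' (a := 0) (b := δ)
      (by linarith : -1 < -s))
    rw [intervalIntegrable_iff_integrableOn_Ioo_of_le hδ.le] at this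
    exact this
  have hI : IntegrableOn (fun h : Euc N => f ‖h‖) (ball 0 δ) := by
    rw [integrableOn_fun_norm_addHaar]
    simp only [finrank_euclideanSpace_fin]
    exact hint.congr_fun e measurableSet_Ioo
  have hval : ∫ h in ball (0 : Euc N) δ, f ‖h‖ = sphereArea N / (1 - s) := by
    have h1 : ∫ h in ball (0 : Euc N) δ, f ‖h‖ = ∫ h : Euc N, (Iio δ).indicator f ‖h‖ := by
      rw [← integral_indicator measurableSet_ball]
      refine integral_congr_ae (.of_forall fun h => ?_)
      simp [indicator]
    have h2 : ∫ y in Ioi (0:ℝ), y ^ (N - 1) • (Iio δ).indicator f y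
        = ∫ y in Ioo 0 δ, δ ^ (s - 1) * y ^ (-s) := by
      rw [setIntegral_congr_fun measurableSet_Ioo e, ← integral_indicator measurableSet_Ioi,
        ← integral_indicator measurableSet_Ioo]
      refine integral_congr_ae (.of_forall fun y => ?_)
      by_cases h : 0 < y <;> by_cases h' : y < δ <;> simp [indicator, h, h']
    have h3 : ∫ y in Ioo 0 δ, δ ^ (s - 1) * y ^ (-s) = 1 / (1 - s) := by
      rw [integral_const_mul, ← integral_Ioc_eq_integral_Ioo,
        ← intervalIntegral.integral_of_le hδ.le, integral_rpow (Or.inl (by linarith)),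
        show -s + 1 = 1 - s by ring, Real.zero_rpow hs.ne', sub_zero, mul_div_assoc',
        ← Real.rpow_add hδ]
      simp
    rw [h1, integral_fun_norm_addHaar]
    simp only [finrank_euclideanSpace_fin]
    rw [h2, h3]
    have := (volume : Measure (Euc N)).toSphere_real_apply_univ
    simp only [finrank_euclideanSpace_fin, measureReal_def] at this
    rw [sphereArea, this, measureReal_def]
    simp only [nsmul_eq_mul, smul_eq_mul]
    ring
  change ∫⁻ h in ball (0 : Euc N) δ, ENNReal.ofReal (f ‖h‖) ≤ _
  rw [← ofReal_integral_eq_lintegral_ofReal hI (.of_forall fun h => hf0 _ (norm_nonneg _)), hval]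
  refine ENNReal.ofReal_le_ofReal ?_
  have hA : 0 ≤ sphereArea N := ENNReal.toReal_nonneg
  have hN' : (1:ℝ) ≤ N := by exact_mod_cast hN
  gcongr
  nlinarith

/-- **Upper bound by the gradient modular** (Proposition 3.5 / `mainprop2`):
`Ψ_{s,G,δ}(u) ≤ [N ω_N/(1-s)] ∫ G(δ^{1-s}|∇u|)`. -/
theorem energy_le_gradient_modular
    (N : ℕ) (hN : 1 ≤ N) (δ : ℝ) (hδ : 0 < δ) (s : ℝ) (hs0 : 0 < s) (hs1 : s < 1)
    (G : ℝ → ℝ) (hG : IsOrlicz G)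
    (u : Euc N → ℝ) (V : Euc N → Euc N) (hV : HasWeakGradient N u V) :
    PsiG N s δ G u ≤ ENNReal.ofReal ((N : ℝ) * sphereArea N / (1 - s)) *
      ∫⁻ x, ENNReal.ofReal (G (δ ^ (1 - s) * ‖V x‖)) := by
  -- Both sides only depend on the a.e. classes of `u` and `V`, so both may be taken measurable.
  wlog hm : Measurable u ∧ Measurable V generalizing u V
  · have hu := hV.1.aestronglyMeasurable
    have hVV := hV.2.1.aestronglyMeasurable
    have := this _ _ (hV.congr hu.ae_eq_mk hVV.ae_eq_mk)
      ⟨hu.stronglyMeasurable_mk.measurable, hVV.stronglyMeasurable_mk.measurable⟩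
    rw [PsiG_congr hu.ae_eq_mk]
    refine this.trans_eq ?_
    congr 1
    refine lintegral_congr_ae (hVV.ae_eq_mk.mono fun x hx => ?_)
    simp only [← hx]
  obtain ⟨hum, hVm⟩ := hm
  have : Nonempty (Fin N) := ⟨⟨0, hN⟩⟩
  have hH := hG.isGauge
  set H : ℝ → ℝ := fun t => G |t| with hHdef
  have hHm : Measurable H := hH.cont.measurable
  have hGH : ∀ t, 0 ≤ t → G t = H t := fun t ht => by simp only [hHdef, abs_of_nonneg ht]
  have hR : ∀ x, G (δ ^ (1 - s) * ‖V x‖) = H (δ ^ (1 - s) * ‖V x‖) := fun x =>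
    hGH _ (by positivity)
  simp only [hR]
  set M := ∫⁻ x, ENNReal.ofReal (H (δ ^ (1 - s) * ‖V x‖)) with hM
  -- The integrand of the energy after the substitution `y = x + h`.
  let F : Euc N → Euc N → ℝ≥0∞ := fun x h =>
    ENNReal.ofReal (H (|u x - u (x + h)| / ‖h‖ ^ s) / ‖h‖ ^ (N : ℝ))
  have hF : Measurable (Function.uncurry F) := by
    simp only [F, Function.uncurry_def]
    fun_prop
  have hpsi : PsiG N s δ G u = ∫⁻ x, ∫⁻ h in ball (0 : Euc N) δ, F x h := by
    refine lintegral_congr fun x => ?_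
    rw [← lintegral_indicator measurableSet_ball, ← lintegral_indicator measurableSet_ball,
      ← lintegral_add_left_eq_self _ x]
    refine lintegral_congr fun h => ?_
    have hnorm : ‖x - (x + h)‖ = ‖h‖ := by simp
    simp only [indicator, mem_ball, dist_self_add_left, dist_zero_right, hnorm, F]
    rw [hGH _ (by positivity)]
  rw [hpsi, lintegral_lintegral_swap hF.aemeasurable]
  calc _ ≤ ∫⁻ h in ball (0 : Euc N) δ,
          ENNReal.ofReal ((‖h‖ / δ) ^ (1 - s) / ‖h‖ ^ (N : ℝ)) * M := by
        have hne : ∀ᵐ h : Euc N, h ≠ 0 := by simp [ae_iff]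
        refine lintegral_mono_ae ?_
        filter_upwards [ae_restrict_mem measurableSet_ball, ae_restrict_of_ae hne] with h hh h0
        have hb : ‖h‖ < δ := by simpa using hh
        have hpos : 0 < ‖h‖ ^ (N : ℝ) := Real.rpow_pos_of_pos (norm_pos_iff.2 h0) _
        simp only [F, ENNReal.ofReal_div_of_pos hpos, div_eq_mul_inv (ENNReal.ofReal _)]
        rw [lintegral_mul_const _ (by fun_prop), mul_right_comm]
        gcongr
        exact slice_energy_le hV hVm hH hδ hs1 h0 hb
    _ = (∫⁻ h in ball (0 : Euc N) δ,
          ENNReal.ofReal ((‖h‖ / δ) ^ (1 - s) / ‖h‖ ^ (N : ℝ))) * M :=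
        lintegral_mul_const _ (by fun_prop)
    _ ≤ _ := by
        gcongr
        exact radial N hN δ hδ s hs1
end

section
/- Let N ≥ 1, 0 < s < 1, let G be an Orlicz function with Δ₂ constant 𝔠, let u ∈ L^G(ℝ^N), and let 0 < δ₂ < δ₁. Then [1/G(δ₁^{1−s})] Ψ_{s,G,δ₁}(u) ≤ [1/G(δ₂^{1−s})] Ψ_{s,G,δ₂}(u) + (𝔠 ω_N N / s) (1 − (δ₂/δ₁)^s) [1/G(δ₂^{1−s})] ∫_{ℝ^N} G(δ₂^{−s}|u(x)|) dx, where ω_N = σ(𝕊^{N−1}) is the surface area of the unit sphere in ℝ^N. -/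
/-!
Split the ball `B(x, δ₁)` into `B(x, δ₂)` and the annulus `δ₂ ≤ |x - y| < δ₁`. The ball contributes
`Ψ_{s,G,δ₂}(u)`. On the annulus, convexity and Δ₂ give
`G (a + b) ≤ (c / 2) (G a + G b)` (`orlicz_add_le`), while convexity and `G 0 = 0` give
`G (r^{-s} t) ≤ (δ₂ / r)^s G (δ₂^{-s} t)` for `r ≥ δ₂`. Hence the integrand there is at most
`(c / 2) k(x - y) (H x + H y)`, where `H = G (δ₂^{-s} |u|)` and `k` is the radial kernel
`(δ₂ / |z|)^s |z|^{-N}` supported on the annulus (`integrand_le_on_annulus`). By Tonelli and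
translation invariance this majorant integrates to `c (∫ k) (∫ H)`, and polar coordinates give
`∫ k = (ω_N / s) (1 - (δ₂ / δ₁)^s)` (`lintegral_annulusKernel`). The theorem follows from
`G (δ₂^{1-s}) ≤ G (δ₁^{1-s})`, with the factor `N ≥ 1` in its constant to spare.
-/

open MeasureTheory Metric Filter Set
open scoped ENNReal RealInnerProductSpace Topology NNReal

noncomputable section

/-- The radial profile `r ↦ (δ₂ / r)^s r^{-N}`, cut off to `δ₂ ≤ r < δ₁`. -/
def annulusKernel (N : ℕ) (s δ₁ δ₂ : ℝ) : ℝ → ℝ :=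
  (Ico δ₂ δ₁).indicator fun r => (δ₂ / r) ^ s / r ^ (N : ℝ)

end

lemma measurable_annulusKernel (N : ℕ) (s δ₁ δ₂ : ℝ) :
    Measurable (annulusKernel N s δ₁ δ₂) := by
  unfold annulusKernel
  refine Measurable.indicator ?_ measurableSet_Ico
  fun_prop

lemma annulusKernel_nonneg (N : ℕ) (s δ₁ δ₂ : ℝ) (hδ₂ : 0 < δ₂) (r : ℝ) :
    0 ≤ annulusKernel N s δ₁ δ₂ r := by
  unfold annulusKernel
  refine indicator_nonneg (fun x hx => ?_) r
  have : 0 < x := hδ₂.trans_le hx.1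
  positivity

/-- The Jacobian factor `r^{N-1}` cancels all of the kernel but `δ₂^s r^{-s-1}`. -/
lemma pow_mul_annulusKernel (N : ℕ) (hN : 1 ≤ N) (s δ₁ δ₂ : ℝ) (hδ₂ : 0 < δ₂) (r : ℝ) :
    r ^ (N - 1) * annulusKernel N s δ₁ δ₂ r =
      (Ico δ₂ δ₁).indicator (fun r => δ₂ ^ s * r ^ (-s - 1)) r := by
  unfold annulusKernel
  by_cases hr : r ∈ Ico δ₂ δ₁
  · have h0 : 0 < r := hδ₂.trans_le hr.1
    obtain ⟨m, rfl⟩ : ∃ m, N = m + 1 := ⟨N - 1, by omega⟩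
    rw [indicator_of_mem hr, indicator_of_mem hr, Real.div_rpow hδ₂.le h0.le,
      Real.rpow_natCast, Real.rpow_sub h0, Real.rpow_neg h0.le, Real.rpow_one,
      Nat.add_sub_cancel, pow_succ]
    have : 0 < r ^ s := Real.rpow_pos_of_pos h0 s
    field_simp
  · simp [indicator_of_notMem hr]

lemma lintegral_annulusKernel (N : ℕ) (hN : 1 ≤ N) (s δ₁ δ₂ : ℝ) (hs : 0 < s)
    (hδ₂ : 0 < δ₂) (hδ : δ₂ < δ₁) :
    ∫⁻ z : Euc N, ENNReal.ofReal (annulusKernel N s δ₁ δ₂ ‖z‖) =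
      ENNReal.ofReal (sphereArea N / s * (1 - (δ₂ / δ₁) ^ s)) := by
  have hδ₁ : 0 < δ₁ := hδ₂.trans hδ
  have : Nonempty (Fin N) := ⟨⟨0, hN⟩⟩
  have h0 : (0 : ℝ) ∉ uIcc δ₂ δ₁ := by
    rw [uIcc_of_le hδ.le]; exact fun h => absurd h.1 (not_le.2 hδ₂)
  have hint : IntegrableOn (fun r : ℝ => δ₂ ^ s * r ^ (-s - 1)) (Ico δ₂ δ₁) := by
    have h : IntervalIntegrable (fun r : ℝ => δ₂ ^ s * r ^ (-s - 1)) volume δ₂ δ₁ :=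
      (intervalIntegral.intervalIntegrable_rpow (Or.inr h0)).const_mul _
    rwa [intervalIntegrable_iff_integrableOn_Ico_of_le hδ.le] at h
  have hrad : ∀ r : ℝ, r ^ (Module.finrank ℝ (Euc N) - 1) • annulusKernel N s δ₁ δ₂ r =
      (Ico δ₂ δ₁).indicator (fun r => δ₂ ^ s * r ^ (-s - 1)) r := fun r => by
    rw [finrank_euclideanSpace_fin, smul_eq_mul, pow_mul_annulusKernel N hN s δ₁ δ₂ hδ₂]
  have hI : Integrable (fun z : Euc N => annulusKernel N s δ₁ δ₂ ‖z‖) := by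
    rw [integrable_fun_norm_addHaar]
    simp_rw [hrad]
    exact ((integrable_indicator_iff measurableSet_Ico).2 hint).integrableOn
  rw [← ofReal_integral_eq_lintegral_ofReal hI
    (ae_of_all _ fun z => annulusKernel_nonneg N s δ₁ δ₂ hδ₂ _)]
  congr 1
  rw [integral_fun_norm_addHaar]
  simp_rw [hrad]
  have hsub : Ioi (0 : ℝ) ∩ Ico δ₂ δ₁ = Ico δ₂ δ₁ :=
    inter_eq_right.2 fun r hr => hδ₂.trans_le hr.1
  rw [setIntegral_indicator measurableSet_Ico, hsub, integral_Ico_eq_integral_Ioc,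
    ← intervalIntegral.integral_of_le hδ.le, intervalIntegral.integral_const_mul,
    integral_rpow (Or.inr ⟨by linarith, h0⟩)]
  have harea : sphereArea N = N * (volume : Measure (Euc N)).real (ball 0 1) := by
    have := (volume : Measure (Euc N)).toSphere_real_apply_univ
    rw [finrank_euclideanSpace_fin] at this
    exact this
  rw [harea, finrank_euclideanSpace_fin, nsmul_eq_mul, smul_eq_mul, Real.div_rpow hδ₂.le hδ₁.le,
    show -s - 1 + 1 = -s by ring, Real.rpow_neg hδ₁.le, Real.rpow_neg hδ₂.le]
  have h1 : 0 < δ₁ ^ s := Real.rpow_pos_of_pos hδ₁ s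
  have h2 : 0 < δ₂ ^ s := Real.rpow_pos_of_pos hδ₂ s
  field_simp
  ring

/-- Convexity at the midpoint of `2a` and `2b`, then Δ₂. -/
lemma orlicz_add_le {G : ℝ → ℝ} (hG : IsOrlicz G) {c : ℝ}
    (hΔ₂ : ∀ t ≥ (0:ℝ), G (2 * t) ≤ c * G t) {a b : ℝ} (ha : 0 ≤ a) (hb : 0 ≤ b) :
    G (a + b) ≤ c / 2 * (G a + G b) := by
  obtain ⟨-, -, hconv, -⟩ := hG
  have ha' : 2 * a ∈ Ici (0 : ℝ) := mem_Ici.2 (by positivity)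
  have hb' : 2 * b ∈ Ici (0 : ℝ) := mem_Ici.2 (by positivity)
  have h := hconv.2 ha' hb' (show (0 : ℝ) ≤ 1 / 2 by norm_num)
    (show (0 : ℝ) ≤ 1 / 2 by norm_num) (by norm_num)
  simp only [smul_eq_mul] at h
  rw [show 1 / 2 * (2 * a) + 1 / 2 * (2 * b) = a + b by ring] at h
  linarith [hΔ₂ a ha, hΔ₂ b hb]

/-- Convexity between `0` and `t`, using `G 0 = 0`. -/
lemma orlicz_mul_le {G : ℝ → ℝ} (hG : IsOrlicz G) {l t : ℝ} (hl0 : 0 ≤ l) (hl1 : l ≤ 1)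
    (ht : 0 ≤ t) : G (l * t) ≤ l * G t := by
  obtain ⟨-, -, hconv, -, h0, -⟩ := hG
  have h := hconv.2 (mem_Ici.2 ht) (mem_Ici.2 (le_refl (0 : ℝ))) hl0
    (sub_nonneg.2 hl1) (by ring)
  simpa [h0] using h

/-- The pointwise majorant of the energy density at distance `r ∈ [δ₂, δ₁)`, for values
`a = u x`, `b = u y`. -/
lemma integrand_le_on_annulus {N : ℕ} {s : ℝ} (hs : 0 < s) {G : ℝ → ℝ} (hG : IsOrlicz G)
    {c : ℝ} (hc : 2 < c) (hΔ₂ : ∀ t ≥ (0:ℝ), G (2 * t) ≤ c * G t) {δ₁ δ₂ : ℝ} (hδ₂ : 0 < δ₂)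
    {r : ℝ} (hr : r ∈ Ico δ₂ δ₁) (a b : ℝ) :
    G (|a - b| / r ^ s) / r ^ (N : ℝ) ≤
      c / 2 * (annulusKernel N s δ₁ δ₂ r * (G (δ₂ ^ (-s) * |a|) + G (δ₂ ^ (-s) * |b|))) := by
  have h0 : 0 < r := hδ₂.trans_le hr.1
  have hrs : 0 < r ^ s := Real.rpow_pos_of_pos h0 s
  have hds : 0 < δ₂ ^ s := Real.rpow_pos_of_pos hδ₂ s
  set l := (δ₂ / r) ^ s with hl
  have hl0 : 0 ≤ l := by positivity
  have hl1 : l ≤ 1 := Real.rpow_le_one (by positivity) ((div_le_one h0).2 hr.1) hs.le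
  have key : ∀ t : ℝ, G (|t| / r ^ s) ≤ l * G (δ₂ ^ (-s) * |t|) := fun t => by
    have h := orlicz_mul_le hG hl0 hl1 (t := δ₂ ^ (-s) * |t|) (by positivity)
    have e : l * (δ₂ ^ (-s) * |t|) = |t| / r ^ s := by
      rw [hl, Real.div_rpow hδ₂.le h0.le, Real.rpow_neg hδ₂.le]
      field_simp
    rwa [e] at h
  have hmono : G (|a - b| / r ^ s) ≤ G (|a| / r ^ s + |b| / r ^ s) := by
    refine hG.2.2.2.1.monotoneOn (mem_Ici.2 (by positivity)) (mem_Ici.2 (by positivity)) ?_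
    rw [← add_div]
    gcongr
    exact abs_sub a b
  have hadd := orlicz_add_le hG hΔ₂ (a := |a| / r ^ s) (b := |b| / r ^ s)
    (by positivity) (by positivity)
  have hmain : G (|a - b| / r ^ s) ≤
      c / 2 * (l * (G (δ₂ ^ (-s) * |a|) + G (δ₂ ^ (-s) * |b|))) := by
    refine (hmono.trans hadd).trans ?_
    refine mul_le_mul_of_nonneg_left ?_ (by linarith)
    rw [mul_add]
    exact add_le_add (key a) (key b)
  unfold annulusKernel
  rw [indicator_of_mem hr]
  calc _ ≤ c / 2 * (l * (G (δ₂ ^ (-s) * |a|) + G (δ₂ ^ (-s) * |b|))) / r ^ (N : ℝ) := by gcongr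
    _ = _ := by rw [← hl]; ring

/-- Tonelli and translation invariance: each of the two halves integrates to `(∫ k) (∫ H)`. -/
lemma lintegral_kernel_mul_add {N : ℕ} {k H : Euc N → ℝ≥0∞} (hk : Measurable k)
    (hH : Measurable H) :
    ∫⁻ x, ∫⁻ y, k (x - y) * (H x + H y) = 2 * ((∫⁻ z, k z) * ∫⁻ x, H x) := by
  have hkm : Measurable fun p : Euc N × Euc N => k (p.1 - p.2) := by fun_prop
  have h1 : ∫⁻ x, ∫⁻ y, k (x - y) * H x = (∫⁻ z, k z) * ∫⁻ x, H x := by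
    have : ∀ x, ∫⁻ y, k (x - y) * H x = (∫⁻ z, k z) * H x := fun x => by
      rw [lintegral_mul_const _ (by fun_prop), lintegral_sub_left_eq_self k x]
    simp_rw [this]
    rw [lintegral_const_mul _ hH]
  have h2 : ∫⁻ x, ∫⁻ y, k (x - y) * H y = (∫⁻ z, k z) * ∫⁻ x, H x := by
    rw [lintegral_lintegral_swap (by fun_prop)]
    have : ∀ y, ∫⁻ x, k (x - y) * H y = (∫⁻ z, k z) * H y := fun y => by
      rw [lintegral_mul_const _ (by fun_prop), lintegral_sub_right_eq_self k y]
    simp_rw [this]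
    rw [lintegral_const_mul _ hH]
  have h3 : ∀ x, ∫⁻ y, k (x - y) * (H x + H y) =
      (∫⁻ y, k (x - y) * H x) + ∫⁻ y, k (x - y) * H y := fun x => by
    simp_rw [mul_add]
    rw [lintegral_add_left (by fun_prop)]
  simp_rw [h3]
  rw [lintegral_add_left, h1, h2, two_mul]
  exact Measurable.lintegral_prod_right' (f := fun p : Euc N × Euc N => k (p.1 - p.2) * H p.1)
    (by fun_prop)

/-- The energy comparison without the weights `1 / G (δᵢ^{1-s})`. -/
lemma psi_le_psi_add {N : ℕ} (hN : 1 ≤ N) {s : ℝ} (hs : 0 < s)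
    {G : ℝ → ℝ} (hG : IsOrlicz G) {c : ℝ} (hc : 2 < c)
    (hΔ₂ : ∀ t ≥ (0:ℝ), G (2 * t) ≤ c * G t)
    {u : Euc N → ℝ} (hum : Measurable u) {δ₁ δ₂ : ℝ} (hδ₂ : 0 < δ₂) (hδ : δ₂ < δ₁) :
    PsiG N s δ₁ G u ≤ PsiG N s δ₂ G u +
      ENNReal.ofReal (c * (sphereArea N / s * (1 - (δ₂ / δ₁) ^ s))) *
        ∫⁻ x, ENNReal.ofReal (G (δ₂ ^ (-s) * |u x|)) := by
  set H : Euc N → ℝ≥0∞ := fun x => ENNReal.ofReal (G (δ₂ ^ (-s) * |u x|)) with hHdef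
  set k : Euc N → ℝ≥0∞ := fun z => ENNReal.ofReal (annulusKernel N s δ₁ δ₂ ‖z‖) with hkdef
  have hd : 0 < δ₂ ^ (-s) := Real.rpow_pos_of_pos hδ₂ _
  have hH : Measurable H := by
    -- `G` is only controlled on `[0, ∞)`; precomposing with `|·|` makes it continuous on `ℝ`.
    have hGc : Continuous fun t : ℝ => G |t| :=
      hG.2.1.comp_continuous continuous_abs fun t => abs_nonneg t
    have : H = fun x => ENNReal.ofReal ((fun t : ℝ => G |t|) (δ₂ ^ (-s) * u x)) := by
      ext x; simp only [hHdef, abs_mul, abs_of_pos hd]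
    rw [this]
    exact (hGc.measurable.comp (hum.const_mul _)).ennreal_ofReal
  have hk : Measurable k :=
    ((measurable_annulusKernel N s δ₁ δ₂).comp measurable_norm).ennreal_ofReal
  have hpt : ∀ x, (∫⁻ y in ball x δ₁,
      ENNReal.ofReal (G (|u x - u y| / ‖x - y‖ ^ s) / ‖x - y‖ ^ (N : ℝ))) ≤
      (∫⁻ y in ball x δ₂,
        ENNReal.ofReal (G (|u x - u y| / ‖x - y‖ ^ s) / ‖x - y‖ ^ (N : ℝ))) +
      ENNReal.ofReal (c / 2) * ∫⁻ y, k (x - y) * (H x + H y) := fun x => by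
    rw [← lintegral_indicator measurableSet_ball, ← lintegral_indicator measurableSet_ball,
      ← lintegral_const_mul _ (by fun_prop), ← lintegral_add_right _ (by fun_prop)]
    refine lintegral_mono fun y => ?_
    have hmem : ∀ δ : ℝ, y ∈ ball x δ ↔ ‖x - y‖ < δ := fun δ => by
      rw [mem_ball', dist_eq_norm]
    by_cases h1 : y ∈ ball x δ₁
    · by_cases h2 : y ∈ ball x δ₂
      · simp only [indicator_of_mem h1, indicator_of_mem h2]
        exact le_self_add
      · simp only [indicator_of_mem h1, indicator_of_notMem h2, zero_add]
        have hr : ‖x - y‖ ∈ Ico δ₂ δ₁ :=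
          ⟨not_lt.1 fun h => h2 ((hmem _).2 h), (hmem _).1 h1⟩
        have hGn : ∀ z, 0 ≤ G (δ₂ ^ (-s) * |u z|) := fun z => hG.1 _ (by positivity)
        simp only [hkdef, hHdef]
        rw [← ENNReal.ofReal_add (hGn x) (hGn y),
          ← ENNReal.ofReal_mul (annulusKernel_nonneg N s δ₁ δ₂ hδ₂ _),
          ← ENNReal.ofReal_mul (by linarith)]
        exact ENNReal.ofReal_le_ofReal (integrand_le_on_annulus hs hG hc hΔ₂ hδ₂ hr _ _)
    · simp only [indicator_of_notMem h1, zero_le]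
  have hmeas : Measurable fun x => ∫⁻ y, k (x - y) * (H x + H y) :=
    Measurable.lintegral_prod_right'
      (f := fun p : Euc N × Euc N => k (p.1 - p.2) * (H p.1 + H p.2)) (by fun_prop)
  unfold PsiG
  refine (lintegral_mono hpt).trans ?_
  rw [lintegral_add_right _ (hmeas.const_mul _), lintegral_const_mul _ hmeas,
    lintegral_kernel_mul_add hk hH, lintegral_annulusKernel N hN s δ₁ δ₂ hs hδ₂ hδ,
    ENNReal.ofReal_mul (p := c) (by linarith), ← mul_assoc, ← mul_assoc]
  have : ENNReal.ofReal (c / 2) * 2 = ENNReal.ofReal c := by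
    rw [show (2 : ℝ≥0∞) = ENNReal.ofReal 2 by simp, ← ENNReal.ofReal_mul (by linarith)]
    congr 1; ring
  rw [this]

/-- **Comparison of scaled energies at two horizons** (Lemma 4.4 / `useles`). -/
theorem scaled_energy_comparison
    (N : ℕ) (hN : 1 ≤ N) (s : ℝ) (hs0 : 0 < s) (hs1 : s < 1)
    (G : ℝ → ℝ) (hG : IsOrlicz G)
    (c : ℝ) (hc : 2 < c) (hΔ₂ : ∀ t ≥ (0:ℝ), G (2 * t) ≤ c * G t)
    (u : Euc N → ℝ) (hum : Measurable u) (huG : PhiG N G u < ⊤)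
    (δ₁ δ₂ : ℝ) (hδ₂ : 0 < δ₂) (hδ : δ₂ < δ₁) :
    ENNReal.ofReal (1 / G (δ₁ ^ (1 - s))) * PsiG N s δ₁ G u ≤
      ENNReal.ofReal (1 / G (δ₂ ^ (1 - s))) * PsiG N s δ₂ G u +
        ENNReal.ofReal (c * sphereArea N * (N : ℝ) / s * (1 - (δ₂ / δ₁) ^ s) *
            (1 / G (δ₂ ^ (1 - s)))) *
          ∫⁻ x, ENNReal.ofReal (G (δ₂ ^ (-s) * |u x|)) := by
  have hδ₁ : 0 < δ₁ := hδ₂.trans hδ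
  have hp2 : 0 < δ₂ ^ (1 - s) := Real.rpow_pos_of_pos hδ₂ _
  have hp1 : 0 < δ₁ ^ (1 - s) := Real.rpow_pos_of_pos hδ₁ _
  have hG2 : 0 < G (δ₂ ^ (1 - s)) := by
    have h := hG.2.2.2.1 (mem_Ici.2 le_rfl) (mem_Ici.2 hp2.le) hp2
    rwa [hG.2.2.2.2.1] at h
  have hGle : G (δ₂ ^ (1 - s)) ≤ G (δ₁ ^ (1 - s)) :=
    hG.2.2.2.1.monotoneOn (mem_Ici.2 hp2.le) (mem_Ici.2 hp1.le)
      (Real.rpow_le_rpow hδ₂.le hδ.le (by linarith))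
  have hq : (δ₂ / δ₁) ^ s ≤ 1 :=
    Real.rpow_le_one (by positivity) ((div_le_one hδ₁).2 hδ.le) hs0.le
  have harea : 0 ≤ sphereArea N := ENNReal.toReal_nonneg
  have hN' : (1 : ℝ) ≤ N := by exact_mod_cast hN
  have hA : 0 ≤ c * (sphereArea N / s * (1 - (δ₂ / δ₁) ^ s)) :=
    mul_nonneg (by linarith) (mul_nonneg (by positivity) (by linarith))
  refine (mul_le_mul' (ENNReal.ofReal_le_ofReal (one_div_le_one_div_of_le hG2 hGle))
    (psi_le_psi_add hN hs0 hG hc hΔ₂ hum hδ₂ hδ)).trans ?_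
  rw [mul_add, ← mul_assoc (ENNReal.ofReal _) (ENNReal.ofReal _), ← ENNReal.ofReal_mul (by positivity)]
  refine add_le_add le_rfl (mul_le_mul' (ENNReal.ofReal_le_ofReal ?_) le_rfl)
  calc 1 / G (δ₂ ^ (1 - s)) * (c * (sphereArea N / s * (1 - (δ₂ / δ₁) ^ s)))
      ≤ 1 / G (δ₂ ^ (1 - s)) * (c * (sphereArea N / s * (1 - (δ₂ / δ₁) ^ s)) * N) := by
        exact mul_le_mul_of_nonneg_left (le_mul_of_one_le_right hA hN') (by positivity)
    _ = _ := by ring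
end

section
/- Let N ≥ 1, p ≥ 2, 0 < s < 1, a > 0, let e ∈ ℝ^N be a unit vector, and let G(t) = t^p (1 + |ln t|) for t > 0 with G(0) = 0. Then lim_{δ→0⁺} [p(1−s)/G(δ^{1−s})] ∫_{B(0,δ)} G(a |e·h| / |h|^s) |h|^{−N} dh = K_{N,p} a^p. -/
/-!
The measure `dh / |h|^N` is invariant under dilations, so the substitution `h = δ k` turns the
integral over `B(0,δ)` into `∫_{B(0,1)} G(ε x(k)) |k|^{-N} dk` with `ε = δ^{1-s}` and
`x(k) = a |e·k| / |k|^s` (`setIntegral_ball_rescale`). Since `G` is regularly varying of index `p`,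
`G(ε x) / G(ε) → x^p` as `ε → 0⁺` (`tendsto_logOrlicz_ratio`). Submultiplicativity
`G(ε x) ≤ G(ε) G(x)`, which comes from `1 + |α + β| ≤ (1 + |α|)(1 + |β|)`, bounds the quotient by
`G(x(k)) ≤ C |k|^{(1-s)(p-1)}`, and `|k|^{(1-s)(p-1) - N}` is integrable on the unit ball; hence
dominated convergence applies. The limit `∫_{B(0,1)} x(k)^p |k|^{-N} dk` is computed in polar
coordinates (`setIntegral_ball_rpow`): it equals `a^p K_{N,p} ∫_0^1 r^{p(1-s)-1} dr`, and the radial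
factor is `1 / (p(1-s))`.
-/

open MeasureTheory Metric Filter Set
open scoped ENNReal RealInnerProductSpace Topology NNReal

noncomputable section

/-- The function `t^p (1 + |ln t|)`. For `p ≠ 0` the formula already takes the value `0` at `t = 0`,
so no case distinction is needed. -/
def logOrlicz (p t : ℝ) : ℝ := t ^ p * (1 + |Real.log t|)

lemma logOrlicz_nonneg (p : ℝ) {t : ℝ} (ht : 0 ≤ t) : 0 ≤ logOrlicz p t := by
  unfold logOrlicz; positivity

lemma logOrlicz_pos (p : ℝ) {t : ℝ} (ht : 0 < t) : 0 < logOrlicz p t := by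
  unfold logOrlicz; positivity

lemma logOrlicz_zero {p : ℝ} (hp : p ≠ 0) : logOrlicz p 0 = 0 := by
  simp [logOrlicz, Real.zero_rpow hp]

lemma measurable_logOrlicz (p : ℝ) : Measurable (logOrlicz p) := by
  unfold logOrlicz
  exact (measurable_id.pow_const p).mul (Real.measurable_log.abs.const_add 1)

lemma logOrlicz_mul_le {p : ℝ} (hp : p ≠ 0) {ε x : ℝ} (hε : 0 < ε) (hx : 0 ≤ x) :
    logOrlicz p (ε * x) ≤ logOrlicz p ε * logOrlicz p x := by
  rcases hx.eq_or_lt with rfl | hx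
  · simp [logOrlicz_zero hp]
  unfold logOrlicz
  rw [Real.mul_rpow hε.le hx.le, Real.log_mul hε.ne' hx.ne']
  have h1 : 1 + |Real.log ε + Real.log x| ≤ (1 + |Real.log ε|) * (1 + |Real.log x|) := by
    have := abs_add_le (Real.log ε) (Real.log x)
    nlinarith [mul_nonneg (abs_nonneg (Real.log ε)) (abs_nonneg (Real.log x))]
  calc ε ^ p * x ^ p * (1 + |Real.log ε + Real.log x|)
      ≤ ε ^ p * x ^ p * ((1 + |Real.log ε|) * (1 + |Real.log x|)) := by gcongr
    _ = _ := by ring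

/-- Regular variation at `0` of index `p`. -/
lemma tendsto_logOrlicz_ratio {p : ℝ} (hp : p ≠ 0) {x : ℝ} (hx : 0 ≤ x) :
    Tendsto (fun ε => logOrlicz p (ε * x) / logOrlicz p ε) (𝓝[>] (0:ℝ)) (𝓝 (x ^ p)) := by
  rcases hx.eq_or_lt with rfl | hx
  · simp [logOrlicz_zero hp, Real.zero_rpow hp]
  have hL : Tendsto (fun ε => 1 + |Real.log ε|) (𝓝[>] (0:ℝ)) atTop :=
    tendsto_atTop_add_const_left _ _ (tendsto_abs_atBot_atTop.comp Real.tendsto_log_nhdsGT_zero)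
  have h0 : Tendsto (fun ε => |Real.log x| / (1 + |Real.log ε|)) (𝓝[>] (0:ℝ)) (𝓝 0) :=
    hL.const_div_atTop _
  have h1 : Tendsto (fun ε => (1 + |Real.log ε + Real.log x|) / (1 + |Real.log ε|))
      (𝓝[>] (0:ℝ)) (𝓝 1) := by
    rw [tendsto_iff_dist_tendsto_zero]
    refine squeeze_zero (fun _ => dist_nonneg) (fun ε => ?_) h0
    have hpos : 0 < 1 + |Real.log ε| := by positivity
    rw [Real.dist_eq, div_sub_one hpos.ne', abs_div, abs_of_pos hpos]
    refine div_le_div_of_nonneg_right ?_ hpos.le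
    simpa using abs_abs_sub_abs_le_abs_sub (Real.log ε + Real.log x) (Real.log ε)
  have h2 := h1.const_mul (x ^ p)
  rw [mul_one] at h2
  refine h2.congr' ?_
  filter_upwards [self_mem_nhdsWithin] with ε (hε : 0 < ε)
  unfold logOrlicz
  rw [Real.mul_rpow hε.le hx.le, Real.log_mul hε.ne' hx.ne']
  have : ε ^ p ≠ 0 := (Real.rpow_pos_of_pos hε p).ne'
  have hpos : 1 + |Real.log ε| ≠ 0 := by positivity
  field_simp

/-- The logarithm costs at most one power: `t (1 + |ln t|) ≤ t + t² + 1`. -/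
lemma logOrlicz_le {p : ℝ} (hp : 2 ≤ p) {t : ℝ} (ht : 0 ≤ t) :
    logOrlicz p t ≤ t ^ (p - 1) * (t + t ^ 2 + 1) := by
  rcases ht.eq_or_lt with rfl | ht
  · rw [logOrlicz_zero (by linarith)]; positivity
  have h1 : |Real.log t| ≤ t + t⁻¹ := by
    have ha := Real.log_le_sub_one_of_pos ht
    have hb := Real.log_le_sub_one_of_pos (inv_pos.2 ht)
    rw [Real.log_inv] at hb
    have := inv_pos.2 ht
    rw [abs_le]; constructor <;> linarith
  have h2 : t ^ p = t ^ (p - 1) * t := by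
    rw [← Real.rpow_add_one ht.ne']; ring_nf
  unfold logOrlicz
  rw [h2, mul_assoc]
  gcongr
  calc t * (1 + |Real.log t|) ≤ t * (1 + (t + t⁻¹)) := by gcongr
    _ = t + t ^ 2 + 1 := by field_simp; ring

/-- The integrand's argument `a |e·h| / |h|^s`. -/
def dirQuot {N : ℕ} (a s : ℝ) (e h : Euc N) : ℝ := a * |(⟪e, h⟫)| / ‖h‖ ^ s

lemma dirQuot_nonneg {N : ℕ} {a : ℝ} (s : ℝ) (ha : 0 < a) (e h : Euc N) : 0 ≤ dirQuot a s e h := by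
  unfold dirQuot; positivity

lemma measurable_dirQuot {N : ℕ} (a s : ℝ) (e : Euc N) : Measurable (dirQuot a s e) := by
  unfold dirQuot
  have : Measurable fun h : Euc N => ⟪e, h⟫ := by fun_prop
  exact (this.abs.const_mul a).div (measurable_norm.pow_const s)

lemma dirQuot_smul {N : ℕ} (a s : ℝ) (e h : Euc N) {δ : ℝ} (hδ : 0 < δ) :
    dirQuot a s e (δ • h) = δ ^ (1 - s) * dirQuot a s e h := by
  unfold dirQuot
  rw [inner_smul_right, abs_mul, abs_of_pos hδ, norm_smul, Real.norm_of_nonneg hδ.le,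
    Real.mul_rpow hδ.le (norm_nonneg _), Real.rpow_sub hδ, Real.rpow_one]
  field_simp

lemma dirQuot_le {N : ℕ} {a s : ℝ} (ha : 0 < a) (hs1 : s < 1) {e : Euc N} (he : ‖e‖ = 1)
    (h : Euc N) : dirQuot a s e h ≤ a * ‖h‖ ^ (1 - s) := by
  unfold dirQuot
  rcases eq_or_ne h 0 with rfl | hh
  · simp [Real.zero_rpow (sub_pos.2 hs1).ne']
  have hn : 0 < ‖h‖ := norm_pos_iff.2 hh
  have h1 : |(⟪e, h⟫)| ≤ ‖h‖ := by simpa [he] using abs_real_inner_le_norm e h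
  rw [Real.rpow_sub hn, Real.rpow_one, mul_div_assoc]
  gcongr

/-- Dilation invariance of `dh / |h|^N`. -/
lemma setIntegral_ball_rescale_s15 {N : ℕ} (a s : ℝ) (e : Euc N) (H : ℝ → ℝ) {δ : ℝ} (hδ : 0 < δ) :
    ∫ h in ball (0 : Euc N) δ, H (dirQuot a s e h) / ‖h‖ ^ (N : ℝ)
      = ∫ h in ball (0 : Euc N) 1, H (δ ^ (1 - s) * dirQuot a s e h) / ‖h‖ ^ (N : ℝ) := by
  have key := Measure.setIntegral_comp_smul_of_pos (volume : Measure (Euc N))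
    (fun h => H (dirQuot a s e h) / ‖h‖ ^ (N : ℝ)) (ball 0 1) hδ
  rw [smul_unitBall_of_pos hδ, finrank_euclideanSpace_fin, smul_eq_mul,
    eq_inv_mul_iff_mul_eq₀ (by positivity), ← integral_const_mul] at key
  rw [← key]
  refine integral_congr_ae (Eventually.of_forall fun h => ?_)
  have hδN : δ ^ N ≠ 0 := by positivity
  simp only [dirQuot_smul a s e h hδ, norm_smul, Real.norm_of_nonneg hδ.le,
    Real.mul_rpow hδ.le (norm_nonneg _), Real.rpow_natCast]
  rw [mul_div_assoc', mul_div_mul_left _ _ hδN]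

lemma integrableOn_norm_rpow_div {N : ℕ} (hN : 1 ≤ N) {b : ℝ} (hb : 0 < b) :
    IntegrableOn (fun h : Euc N => ‖h‖ ^ b / ‖h‖ ^ (N : ℝ)) (ball 0 1) := by
  have : Nonempty (Fin N) := ⟨⟨0, hN⟩⟩
  rw [integrableOn_fun_norm_addHaar volume (f := fun y : ℝ => y ^ b / y ^ (N : ℝ)),
    finrank_euclideanSpace_fin]
  have h := (intervalIntegral.integrableOn_Ioo_rpow_iff (s := b - 1) one_pos).2 (by linarith)
  refine h.congr_fun (fun y hy => ?_) measurableSet_Ioo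
  have hy0 : (0:ℝ) < y := hy.1
  simp only [smul_eq_mul]
  rw [Real.rpow_natCast, Real.rpow_sub_one hy0.ne', ← Nat.sub_add_cancel hN, pow_succ]
  simp only [Nat.add_sub_cancel]
  field_simp

/-- Polar coordinates for the unit ball, for an integrand that separates into angular and radial
factors. -/
lemma setIntegral_ball_polar {N : ℕ} (hN : 1 ≤ N) (F : Euc N → ℝ)
    (A : sphere (0 : Euc N) 1 → ℝ) (R : ℝ → ℝ)
    (hF : ∀ (w : sphere (0 : Euc N) 1) (r : ℝ), 0 < r → F (r • (w : Euc N)) = A w * R r) :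
    ∫ h in ball (0 : Euc N) 1, F h
      = (∫ w, A w ∂(volume : Measure (Euc N)).toSphere) * ∫ r in Ioo (0:ℝ) 1, r ^ (N - 1) * R r := by
  have : Nonempty (Fin N) := ⟨⟨0, hN⟩⟩
  let R' : ℝ → ℝ := (Iio 1).indicator R
  have hF' : ∀ x : ({(0 : Euc N)}ᶜ : Set (Euc N)), (ball (0 : Euc N) 1).indicator F x
      = A (homeomorphUnitSphereProd (Euc N) x).1 * R' (homeomorphUnitSphereProd (Euc N) x).2 := by
    intro x
    have hx : 0 < ‖(x : Euc N)‖ := norm_pos_iff.2 x.2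
    have h1 := hF (homeomorphUnitSphereProd (Euc N) x).1 ‖(x : Euc N)‖ hx
    rw [homeomorphUnitSphereProd_apply_fst_coe, smul_inv_smul₀ hx.ne'] at h1
    rw [homeomorphUnitSphereProd_apply_snd_coe]
    by_cases hb : ‖(x : Euc N)‖ < 1
    · simp [R', hb, h1]
    · simp [R', hb]
  calc ∫ h in ball (0 : Euc N) 1, F h = ∫ h, (ball (0 : Euc N) 1).indicator F h :=
        (integral_indicator measurableSet_ball).symm
    _ = ∫ x : ({(0 : Euc N)}ᶜ : Set (Euc N)), (ball (0 : Euc N) 1).indicator F x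
          ∂(volume.comap Subtype.val) := by
        rw [integral_subtype_comap (measurableSet_singleton _).compl
          ((ball (0 : Euc N) 1).indicator F), restrict_compl_singleton]
    _ = ∫ x : sphere (0 : Euc N) 1 × Ioi (0 : ℝ), A x.1 * R' x.2
          ∂((volume : Measure (Euc N)).toSphere.prod (.volumeIoiPow (N - 1))) := by
        have := (volume : Measure (Euc N)).measurePreserving_homeomorphUnitSphereProd.integral_comp
          (Homeomorph.measurableEmbedding _)
          (fun x : sphere (0 : Euc N) 1 × Ioi (0 : ℝ) => A x.1 * R' x.2)
        rw [finrank_euclideanSpace_fin] at this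
        rw [← this]
        exact integral_congr_ae (Eventually.of_forall hF')
    _ = (∫ w, A w ∂(volume : Measure (Euc N)).toSphere)
          * ∫ r : Ioi (0 : ℝ), R' r ∂(Measure.volumeIoiPow (N - 1)) :=
        integral_prod_mul A fun r : Ioi (0 : ℝ) => R' r
    _ = _ := by
        congr 1
        simp only [Measure.volumeIoiPow, ENNReal.ofReal]
        rw [integral_withDensity_eq_integral_smul
            (measurable_subtype_coe.pow_const _).real_toNNReal,
          integral_subtype_comap measurableSet_Ioi fun r ↦ Real.toNNReal (r ^ (N - 1)) • R' r,
          ← integral_indicator measurableSet_Ioi, ← integral_indicator measurableSet_Ioo]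
        congr 1
        ext r
        by_cases h0 : 0 < r <;> by_cases h1 : r < 1 <;>
          simp [R', h0, h1, NNReal.smul_def]
        left
        positivity

/-- Value of the limiting integral; the radial factor is `∫_0^1 r^{p(1-s)-1} dr = 1 / (p(1-s))`. -/
lemma setIntegral_ball_rpow {N : ℕ} (hN : 1 ≤ N) {p s a : ℝ} (hp : 0 < p) (hs1 : s < 1)
    (ha : 0 < a) (e : Euc N) :
    ∫ h in ball (0 : Euc N) 1, dirQuot a s e h ^ p / ‖h‖ ^ (N : ℝ)
      = sphereK N p e * a ^ p / (p * (1 - s)) := by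
  have hps : 0 < p * (1 - s) := mul_pos hp (sub_pos.2 hs1)
  rw [setIntegral_ball_polar hN (fun h => dirQuot a s e h ^ p / ‖h‖ ^ (N : ℝ))
    (fun w => |(⟪(w : Euc N), e⟫)| ^ p) (fun r => a ^ p * (r ^ (p * (1 - s)) / r ^ N))]
  · have : ∫ r in Ioo (0:ℝ) 1, r ^ (N - 1) * (a ^ p * (r ^ (p * (1 - s)) / r ^ N))
        = a ^ p / (p * (1 - s)) := by
      calc _ = ∫ r in Ioo (0:ℝ) 1, a ^ p * r ^ (p * (1 - s) - 1) := by
            refine setIntegral_congr_fun measurableSet_Ioo fun r hr => ?_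
            have hr0 : (0:ℝ) < r := hr.1
            have hNs : r ^ N = r ^ (N - 1) * r := by rw [← pow_succ, Nat.sub_add_cancel hN]
            rw [Real.rpow_sub_one hr0.ne', hNs]
            field_simp
        _ = a ^ p * ∫ r in (0:ℝ)..1, r ^ (p * (1 - s) - 1) := by
            rw [integral_const_mul, intervalIntegral.integral_of_le zero_le_one,
              integral_Ioc_eq_integral_Ioo]
        _ = _ := by
            rw [integral_rpow (Or.inl (by linarith)), sub_add_cancel, Real.one_rpow,
              Real.zero_rpow hps.ne']
            ring
    rw [this, sphereK]
    ring
  · intro w r hr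
    have hw : ‖(w : Euc N)‖ = 1 := by simp
    simp only [dirQuot_smul a s e _ hr, norm_smul, Real.norm_of_nonneg hr.le, hw, mul_one,
      Real.rpow_natCast]
    unfold dirQuot
    rw [hw, Real.one_rpow, div_one, Real.mul_rpow (by positivity) (by positivity),
      Real.mul_rpow ha.le (abs_nonneg _), ← Real.rpow_mul hr.le, mul_comm (1 - s) p,
      real_inner_comm]
    ring

/-- Dominated convergence on the unit ball, with majorant a multiple of
`|h|^{(1-s)(p-1) - N}`. -/
lemma tendsto_setIntegral_ratio {N : ℕ} (hN : 1 ≤ N) {p s a : ℝ} (hp : 2 ≤ p) (hs1 : s < 1)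
    (ha : 0 < a) {e : Euc N} (he : ‖e‖ = 1) :
    Tendsto (fun ε : ℝ => ∫ h in ball (0 : Euc N) 1,
        logOrlicz p (ε * dirQuot a s e h) / logOrlicz p ε / ‖h‖ ^ (N : ℝ))
      (𝓝[>] (0:ℝ)) (𝓝 (∫ h in ball (0 : Euc N) 1, dirQuot a s e h ^ p / ‖h‖ ^ (N : ℝ))) := by
  have hp0 : p ≠ 0 := by linarith
  have hs : 0 < 1 - s := sub_pos.2 hs1
  have hb : 0 < (1 - s) * (p - 1) := mul_pos hs (by linarith)
  refine tendsto_integral_filter_of_dominated_convergence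
    (fun h => a ^ (p - 1) * (a + a ^ 2 + 1) *
      (‖h‖ ^ ((1 - s) * (p - 1)) / ‖h‖ ^ (N : ℝ))) ?_ ?_ ?_ ?_
  · refine Eventually.of_forall fun ε => Measurable.aestronglyMeasurable ?_
    exact (((measurable_logOrlicz p).comp ((measurable_dirQuot a s e).const_mul ε)).div_const _).div
      (measurable_norm.pow_const _)
  · filter_upwards [self_mem_nhdsWithin] with ε (hε : 0 < ε)
    filter_upwards [ae_restrict_mem measurableSet_ball] with h hh
    have hx := dirQuot_nonneg s ha e h
    have hh1 : ‖h‖ ≤ 1 := by simpa using (mem_ball.1 hh).le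
    have hle := dirQuot_le ha hs1 he h
    have hxa : dirQuot a s e h ≤ a :=
      hle.trans (mul_le_of_le_one_right ha.le (Real.rpow_le_one (norm_nonneg _) hh1 hs.le))
    have hG := logOrlicz_nonneg p (mul_nonneg hε.le hx)
    have hGε := logOrlicz_pos p hε
    rw [Real.norm_of_nonneg (by positivity), ← mul_div_assoc]
    gcongr
    calc logOrlicz p (ε * dirQuot a s e h) / logOrlicz p ε ≤ logOrlicz p (dirQuot a s e h) := by
          rw [div_le_iff₀' hGε]; exact logOrlicz_mul_le hp0 hε hx
      _ ≤ dirQuot a s e h ^ (p - 1) * (dirQuot a s e h + dirQuot a s e h ^ 2 + 1) := logOrlicz_le hp hx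
      _ ≤ (a * ‖h‖ ^ (1 - s)) ^ (p - 1) * (a + a ^ 2 + 1) := by
          have : 0 ≤ p - 1 := by linarith
          gcongr
      _ = _ := by
          rw [Real.mul_rpow ha.le (by positivity), ← Real.rpow_mul (norm_nonneg _)]
          ring
  · exact (integrableOn_norm_rpow_div hN hb).const_mul _
  · exact Eventually.of_forall fun h =>
      (tendsto_logOrlicz_ratio hp0 (dirQuot_nonneg s ha e h)).div_const _

end

/-- **Localization for `G(t) = tᵖ(1 + |ln t|)`** (Remark 3.4, second example). -/
theorem log_orlicz_localization
    (N : ℕ) (hN : 1 ≤ N) (p : ℝ) (hp : 2 ≤ p) (s : ℝ) (hs0 : 0 < s) (hs1 : s < 1)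
    (a : ℝ) (ha : 0 < a) (e : Euc N) (he : ‖e‖ = 1)
    (G : ℝ → ℝ) (hGdef : ∀ t > (0:ℝ), G t = t ^ p * (1 + |Real.log t|)) (hG0 : G 0 = 0) :
    Tendsto (fun δ : ℝ => (p * (1 - s) / G (δ ^ (1 - s))) *
        ∫ h in ball (0 : Euc N) δ, G (a * |(⟪e, h⟫)| / ‖h‖ ^ s) / ‖h‖ ^ (N : ℝ))
      (𝓝[>] (0:ℝ)) (𝓝 (sphereK N p e * a ^ p)) := by
  have hps : p * (1 - s) ≠ 0 := (mul_pos (by linarith) (sub_pos.2 hs1)).ne'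
  have hG : ∀ t, 0 ≤ t → G t = logOrlicz p t := by
    intro t ht
    rcases ht.eq_or_lt with rfl | ht
    · rw [hG0, logOrlicz_zero (by linarith)]
    · exact hGdef t ht
  have hε : Tendsto (fun δ : ℝ => δ ^ (1 - s)) (𝓝[>] (0:ℝ)) (𝓝[>] (0:ℝ)) := by
    refine tendsto_nhdsWithin_iff.2 ⟨?_, ?_⟩
    · have h := (Real.continuousAt_rpow_const 0 (1 - s) (Or.inr (sub_pos.2 hs1).le)).tendsto
      rw [Real.zero_rpow (sub_pos.2 hs1).ne'] at h
      exact h.mono_left nhdsWithin_le_nhds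
    · filter_upwards [self_mem_nhdsWithin] with δ hδ
      exact Real.rpow_pos_of_pos hδ _
  have hlim := ((tendsto_setIntegral_ratio hN hp hs1 ha he).comp hε).const_mul (p * (1 - s))
  rw [setIntegral_ball_rpow hN (by linarith) hs1 ha e, mul_div_cancel₀ _ hps] at hlim
  refine hlim.congr' ?_
  filter_upwards [self_mem_nhdsWithin] with δ (hδ : 0 < δ)
  have h1 : ∫ h in ball (0 : Euc N) δ, G (a * |(⟪e, h⟫)| / ‖h‖ ^ s) / ‖h‖ ^ (N : ℝ)
      = ∫ h in ball (0 : Euc N) δ, logOrlicz p (dirQuot a s e h) / ‖h‖ ^ (N : ℝ) := by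
    refine integral_congr_ae (Eventually.of_forall fun h => ?_)
    simp only
    rw [← hG _ (dirQuot_nonneg s ha e h), dirQuot]
  rw [h1, setIntegral_ball_rescale_s15 a s e (logOrlicz p) hδ, hG _ (by positivity), Function.comp_apply,
    div_mul_eq_mul_div, mul_div_assoc, ← integral_div]
  simp only [div_right_comm]
end

section
/- Let N ≥ 1, 1 < q < p, 0 < s < 1, a > 0, let e ∈ ℝ^N be a unit vector, and let G(t) = max{t^q, t^p}. Then for every δ > 0 with a δ^{1−s} ≤ 1, ∫_{B(0,δ)} G(a |e·h| / |h|^s) |h|^{−N} dh = K_{N,q} a^q δ^{q(1−s)} / (q(1−s)); consequently, lim_{δ→0⁺} [q(1−s)/G(δ^{1−s})] ∫_{B(0,δ)} G(a |e·h| / |h|^s) |h|^{−N} dh = K_{N,q} a^q. -/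
/-!
In polar coordinates `h = r w`, with `r = ‖h‖` and `w` on the unit sphere, the argument of `G` is
`a |w·e| r^(1-s)`. By Cauchy–Schwarz it is at most `a δ^(1-s) ≤ 1` on the ball of radius `δ`, so
only the branch `G t = t ^ q` of the maximum is seen (`max_rpow_integrand_eq`). The integrand is then
a product of `(a |w·e|)^q` and a power of `r`, so the integral splits
(`integral_polar_mul`) into `a ^ q * sphereK N q e` and the radial integral
`∫₀^δ r^(q(1-s)-1) dr = δ^(q(1-s)) / (q(1-s))`. For small `δ` the limit is that of a constant function,
since there `G (δ^(1-s)) = δ^(q(1-s))`.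
-/

open MeasureTheory Metric Filter Set
open scoped ENNReal RealInnerProductSpace Topology NNReal

/-- Integration in polar coordinates of a product of an angular and a radial function. No
integrability is needed: the Fubini formula for products holds with junk values as well. -/
lemma integral_polar_mul (N : ℕ) (hN : 1 ≤ N) (A : Euc N → ℝ) (B : ℝ → ℝ) :
    ∫ h : Euc N, A (‖h‖⁻¹ • h) * B ‖h‖ =
      (∫ w : sphere (0 : Euc N) 1, A w ∂((volume : Measure (Euc N)).toSphere)) *
        ∫ r in Ioi (0:ℝ), r ^ (N - 1) * B r := by
  have : Nonempty (Fin N) := ⟨⟨0, hN⟩⟩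
  have : Nontrivial (Euc N) := inferInstance
  have hd : Module.finrank ℝ (Euc N) = N := by simp
  calc
    ∫ h : Euc N, A (‖h‖⁻¹ • h) * B ‖h‖
      = ∫ x : ({(0)}ᶜ : Set (Euc N)), A (‖x.1‖⁻¹ • x.1) * B ‖x.1‖
          ∂((volume : Measure (Euc N)).comap (↑)) := by
      rw [integral_subtype_comap (measurableSet_singleton _).compl
        fun x : Euc N ↦ A (‖x‖⁻¹ • x) * B ‖x‖, restrict_compl_singleton]
    _ = ∫ x : sphere (0 : Euc N) 1 × Ioi (0:ℝ), A x.1 * B x.2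
          ∂((volume : Measure (Euc N)).toSphere.prod (.volumeIoiPow (N - 1))) := by
      have := ((volume : Measure (Euc N)).measurePreserving_homeomorphUnitSphereProd).integral_comp
        (Homeomorph.measurableEmbedding _)
        (fun x : sphere (0 : Euc N) 1 × Ioi (0:ℝ) => A x.1 * B x.2)
      rw [hd] at this
      simpa using this
    _ = _ := by
      rw [integral_prod_mul (fun w : sphere (0 : Euc N) 1 => A w) (fun r : Ioi (0:ℝ) => B r)]
      congr 1
      simp only [Measure.volumeIoiPow, ENNReal.ofReal]
      rw [integral_withDensity_eq_integral_smul (by fun_prop),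
        integral_subtype_comap measurableSet_Ioi fun r : ℝ ↦ Real.toNNReal (r ^ (N - 1)) • B r]
      refine setIntegral_congr_fun measurableSet_Ioi fun r hr ↦ ?_
      have hr' : 0 ≤ r := le_of_lt hr
      simp [NNReal.smul_def, Real.coe_toNNReal _ (pow_nonneg hr' _)]

/-- On the ball where `a δ^(1-s) ≤ 1`, the integrand is a product of an angular and a radial
factor. At `h = 0` both sides vanish, through `0 ^ q = 0`. -/
lemma max_rpow_integrand_eq {N : ℕ} {q p s a δ : ℝ} (hq : 1 < q) (hqp : q < p)
    (hs1 : s < 1) (ha : 0 < a) {e : Euc N} (he : ‖e‖ = 1)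
    {G : ℝ → ℝ} (hGdef : ∀ t ≥ (0:ℝ), G t = max (t ^ q) (t ^ p))
    (hδ : a * δ ^ (1 - s) ≤ 1) {h : Euc N} (hh : ‖h‖ < δ) :
    G (a * |(⟪e, h⟫)| / ‖h‖ ^ s) / ‖h‖ ^ (N : ℝ) =
      a ^ q * |(⟪‖h‖⁻¹ • h, e⟫)| ^ q * ‖h‖ ^ (q * (1 - s) - N) := by
  have hq0 : q ≠ 0 := by linarith
  rcases eq_or_ne h 0 with rfl | h0
  · have hp0 : p ≠ 0 := by linarith
    simp [hGdef 0 le_rfl, Real.zero_rpow hq0, Real.zero_rpow hp0]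
  have hr : 0 < ‖h‖ := norm_pos_iff.mpr h0
  set r := ‖h‖ with hrdef
  set c := |(⟪r⁻¹ • h, e⟫)| with hc
  have hc0 : 0 ≤ c := abs_nonneg _
  have hin : |(⟪e, h⟫)| = r * c := by
    rw [hc, real_inner_smul_left, abs_mul, abs_inv, abs_of_pos hr, real_inner_comm]
    field_simp
  have hc1 : c ≤ 1 := by
    have h1 : |(⟪e, h⟫)| ≤ r := by simpa [he] using abs_real_inner_le_norm e h
    rw [hin] at h1
    exact le_of_mul_le_mul_left (by linarith) hr
  have harg : a * |(⟪e, h⟫)| / r ^ s = a * c * r ^ (1 - s) := by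
    rw [hin, Real.rpow_sub hr, Real.rpow_one]
    ring
  have hrs : 0 < r ^ (1 - s) := Real.rpow_pos_of_pos hr _
  have ht0 : 0 ≤ a * c * r ^ (1 - s) := by positivity
  have ht1 : a * c * r ^ (1 - s) ≤ 1 := by
    have h1 : r ^ (1 - s) ≤ δ ^ (1 - s) :=
      Real.rpow_le_rpow hr.le hh.le (by linarith)
    calc a * c * r ^ (1 - s) ≤ a * 1 * δ ^ (1 - s) := by gcongr
      _ ≤ 1 := by simpa using hδ
  have hmax : (a * c * r ^ (1 - s)) ^ p ≤ (a * c * r ^ (1 - s)) ^ q :=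
    Real.rpow_le_rpow_of_exponent_ge' ht0 ht1 (by linarith) hqp.le
  rw [harg, hGdef _ ht0, max_eq_left hmax, Real.mul_rpow (by positivity) hrs.le,
    Real.mul_rpow ha.le hc0, ← Real.rpow_mul hr.le, Real.rpow_sub hr, mul_comm (1 - s) q]
  ring

lemma setIntegral_ball_max_rpow {N : ℕ} (hN : 1 ≤ N) {q p s a δ : ℝ} (hq : 1 < q) (hqp : q < p)
    (hs1 : s < 1) (ha : 0 < a) {e : Euc N} (he : ‖e‖ = 1)
    {G : ℝ → ℝ} (hGdef : ∀ t ≥ (0:ℝ), G t = max (t ^ q) (t ^ p))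
    (hδ0 : 0 < δ) (hδ : a * δ ^ (1 - s) ≤ 1) :
    ∫ h in ball (0 : Euc N) δ, G (a * |(⟪e, h⟫)| / ‖h‖ ^ s) / ‖h‖ ^ (N : ℝ) =
      sphereK N q e * a ^ q * δ ^ (q * (1 - s)) / (q * (1 - s)) := by
  have hm : 0 < q * (1 - s) := mul_pos (by linarith) (by linarith)
  have hpolar := integral_polar_mul N hN (fun w => a ^ q * |(⟪w, e⟫)| ^ q)
    ((Iio δ).indicator fun r => r ^ (q * (1 - s) - N))
  have hrad : ∫ r in Ioi (0:ℝ), r ^ (N - 1) * (Iio δ).indicator (fun r => r ^ (q * (1 - s) - N)) r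
      = δ ^ (q * (1 - s)) / (q * (1 - s)) := by
    calc _ = ∫ r in Ioi (0:ℝ), (Iio δ).indicator (fun r => r ^ (q * (1 - s) - 1)) r := by
          refine setIntegral_congr_fun measurableSet_Ioi fun r hr => ?_
          have hr' : 0 < r := hr
          by_cases hrδ : r ∈ Iio δ
          · simp only [indicator_of_mem hrδ]
            rw [← Real.rpow_natCast, ← Real.rpow_add hr', Nat.cast_sub hN]
            congr 1
            push_cast
            ring
          · simp only [indicator_of_notMem hrδ, mul_zero]
      _ = ∫ r in (0:ℝ)..δ, r ^ (q * (1 - s) - 1) := by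
          rw [setIntegral_indicator measurableSet_Iio, Ioi_inter_Iio,
            intervalIntegral.integral_of_le hδ0.le, integral_Ioc_eq_integral_Ioo]
      _ = _ := by
          rw [integral_rpow (Or.inl (by linarith)), sub_add_cancel, Real.zero_rpow hm.ne', sub_zero]
  rw [hrad, integral_const_mul] at hpolar
  rw [← integral_indicator measurableSet_ball]
  trans ∫ h : Euc N, a ^ q * |(⟪‖h‖⁻¹ • h, e⟫)| ^ q *
      (Iio δ).indicator (fun r => r ^ (q * (1 - s) - N)) ‖h‖
  · congr 1
    ext h
    by_cases hh : ‖h‖ < δ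
    · rw [indicator_of_mem (by simpa using hh), indicator_of_mem (by simpa using hh)]
      exact max_rpow_integrand_eq hq hqp hs1 ha he hGdef hδ hh
    · rw [indicator_of_notMem (by simpa using hh), indicator_of_notMem (by simpa using hh),
        mul_zero]
  · rw [hpolar, sphereK]
    ring

/-- **Localization for `G(t) = max{t^q, t^p}`** (Remark 3.4, third example). -/
theorem max_orlicz_localization
    (N : ℕ) (hN : 1 ≤ N) (q p : ℝ) (hq : 1 < q) (hqp : q < p)
    (s : ℝ) (hs0 : 0 < s) (hs1 : s < 1)
    (a : ℝ) (ha : 0 < a) (e : Euc N) (he : ‖e‖ = 1)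
    (G : ℝ → ℝ) (hGdef : ∀ t ≥ (0:ℝ), G t = max (t ^ q) (t ^ p)) :
    (∀ δ > (0:ℝ), a * δ ^ (1 - s) ≤ 1 →
      ∫ h in ball (0 : Euc N) δ, G (a * |(⟪e, h⟫)| / ‖h‖ ^ s) / ‖h‖ ^ (N : ℝ) =
        sphereK N q e * a ^ q * δ ^ (q * (1 - s)) / (q * (1 - s))) ∧
    Tendsto (fun δ : ℝ => (q * (1 - s) / G (δ ^ (1 - s))) *
        ∫ h in ball (0 : Euc N) δ, G (a * |(⟪e, h⟫)| / ‖h‖ ^ s) / ‖h‖ ^ (N : ℝ))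
      (𝓝[>] (0:ℝ)) (𝓝 (sphereK N q e * a ^ q)) := by
  have hmain : ∀ δ > (0:ℝ), a * δ ^ (1 - s) ≤ 1 →
      ∫ h in ball (0 : Euc N) δ, G (a * |(⟪e, h⟫)| / ‖h‖ ^ s) / ‖h‖ ^ (N : ℝ) =
        sphereK N q e * a ^ q * δ ^ (q * (1 - s)) / (q * (1 - s)) :=
    fun δ hδ0 hδ => setIntegral_ball_max_rpow hN hq hqp hs1 ha he hGdef hδ0 hδ
  refine ⟨hmain, ?_⟩
  have hm : 0 < q * (1 - s) := mul_pos (by linarith) (by linarith)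
  have hlim : Tendsto (fun δ : ℝ => a * δ ^ (1 - s)) (𝓝[>] (0:ℝ)) (𝓝 0) := by
    have h1 : Tendsto (fun δ : ℝ => δ ^ (1 - s)) (𝓝 (0:ℝ)) (𝓝 ((0:ℝ) ^ (1 - s))) :=
      (Real.continuousAt_rpow_const 0 (1 - s) (Or.inr (by linarith))).tendsto
    rw [Real.zero_rpow (by linarith)] at h1
    simpa using (h1.mono_left nhdsWithin_le_nhds).const_mul a
  refine tendsto_const_nhds.congr' ?_
  filter_upwards [self_mem_nhdsWithin, hlim.eventually_le_const zero_lt_one,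
    Ioo_mem_nhdsGT (zero_lt_one (α := ℝ))] with δ hδ0 hδ hδ1
  have hδp : 0 < δ := hδ0
  have ht0 : 0 < δ ^ (1 - s) := Real.rpow_pos_of_pos hδp _
  have ht1 : δ ^ (1 - s) ≤ 1 := Real.rpow_le_one hδp.le hδ1.2.le (by linarith)
  have hG : G (δ ^ (1 - s)) = δ ^ (q * (1 - s)) := by
    rw [hGdef _ ht0.le, max_eq_left (Real.rpow_le_rpow_of_exponent_ge ht0 ht1 hqp.le),
      ← Real.rpow_mul hδp.le, mul_comm]
  have hpos : 0 < δ ^ (q * (1 - s)) := Real.rpow_pos_of_pos hδp _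
  have hs : 1 - s ≠ 0 := by linarith
  rw [hmain δ hδp hδ, hG]
  field_simp
end
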